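/- Let (S,T) be a Cuntz-type representation of F_θ^+ on H (m ≥ 2 or n ≥ 2). Suppose that for some k,l > 0 the row-isometry [S_uT_v : |u|=k, |v|=l] is of dilation type. Then for every p,q > 0 the row-isometry [S_uT_v : |u|=p, |v|=q] has no singular direct summand: there is no nonzero closed subspace M of H reducing every operator S_uT_v with |u|=p, |v|=q such that the unital WOT-closed algebra generated on M by the restrictions of these operators is self-adjoint. -/

import Mathlib

noncomputable section

open scoped InnerProductSpace ComplexInnerProductSpace Classical

section GeneralDefs

variable {E : Type*} [NormedAddCommGroup E] [InnerProductSpace ℂ E]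

/-- The operator associated to a word: `wordOp V [a₁, …, a_r] = V a₁ * ⋯ * V a_r`. -/
def wordOp {ι : Type*} (V : ι → E →L[ℂ] E) (w : List ι) : E →L[ℂ] E :=
  (w.map V).prod

/-- The operator associated to a word of fixed length `k` given as a function `Fin k → ι`. -/
def fnWordOp {ι : Type*} {k : ℕ} (V : ι → E →L[ℂ] E) (u : Fin k → ι) : E →L[ℂ] E :=
  wordOp V (List.ofFn u)

/-- The closure of a set of operators in the weak operator topology, described via
basic WOT-neighbourhoods (finitely many vector functionals). -/
def wotClosure (S : Set (E →L[ℂ] E)) : Set (E →L[ℂ] E) :=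
  {A | ∀ ε > (0 : ℝ), ∀ F : Finset (E × E), ∃ B ∈ S, ∀ p ∈ F, ‖⟪p.1, (A - B) p.2⟫‖ < ε}

/-- The unital WOT-closed algebra generated by a set of operators. -/
def genWotAlg (G : Set (E →L[ℂ] E)) : Set (E →L[ℂ] E) :=
  wotClosure ((Algebra.adjoin ℂ G : Subalgebra ℂ (E →L[ℂ] E)) : Set (E →L[ℂ] E))

/-- A wandering vector for a row-isometry `V = [V_a : a ∈ ι]`: a unit vector whose orbit
under all words in the `V_a` is an orthonormal family. -/
def IsWandering {ι : Type*} (V : ι → E →L[ℂ] E) (ζ : E) : Prop :=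
  ‖ζ‖ = 1 ∧ ∀ w w' : List ι,
    ⟪wordOp V w ζ, wordOp V w' ζ⟫ = if w = w' then 1 else 0

/-- Restriction of an operator to an invariant subspace (junk value `0` if not invariant). -/
def restrictCLM (A : E →L[ℂ] E) (M : Submodule ℂ E) : M →L[ℂ] M :=
  if h : ∀ x ∈ M, A x ∈ M then
    { toFun := fun x => ⟨A x, h x x.2⟩
      map_add' := by intro x y; ext; simp
      map_smul' := by intro c x; ext; simp
      cont := Continuous.subtype_mk (A.continuous.comp continuous_subtype_val) _ }
  else 0

/-- The unital WOT-closed algebra on `M` generated by the restrictions of the `V a` to `M`. -/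
def rowAlgOn {ι : Type*} (V : ι → E →L[ℂ] E) (M : Submodule ℂ E) : Set (M →L[ℂ] M) :=
  genWotAlg (Set.range fun a => restrictCLM (V a) M)

/-- The unital WOT-closed algebra on `M` generated by the restrictions of the `V a`
is self-adjoint. -/
def restrictedAlgSelfAdjoint {ι : Type*} (V : ι → E →L[ℂ] E) (M : Submodule ℂ E) : Prop :=
  ∀ A ∈ rowAlgOn V M, ∃ B ∈ rowAlgOn V M,
    ∀ x y : M, ⟪((A x : M) : E), (y : E)⟫ = ⟪(x : E), ((B y : M) : E)⟫

variable [CompleteSpace E]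

/-- A row-isometry is of dilation type if it is defect free and has no nonzero reducing
subspace on which it is either absolutely continuous (spanned by wandering vectors) or
singular (generating a self-adjoint WOT-closed algebra). -/
def IsDilationType {ι : Type*} [Fintype ι] (V : ι → E →L[ℂ] E) : Prop :=
  (∑ a, V a * star (V a)) = 1 ∧
    ¬ ∃ M : Submodule ℂ E, M ≠ ⊥ ∧ IsClosed (M : Set E) ∧
      (∀ a, ∀ x ∈ M, V a x ∈ M) ∧ (∀ a, ∀ x ∈ M, star (V a) x ∈ M) ∧
      ((M = (Submodule.span ℂ {ζ : E | ζ ∈ M ∧ IsWandering V ζ}).topologicalClosure) ∨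
        restrictedAlgSelfAdjoint V M)

end GeneralDefs

/-- An isometric representation of the single-vertex 2-graph `F_θ⁺` on a Hilbert space `H`. -/
structure TwoGraphRep (m n : ℕ) (θ : Equiv.Perm (Fin m × Fin n)) (H : Type*)
    [NormedAddCommGroup H] [InnerProductSpace ℂ H] [CompleteSpace H] where
  S : Fin m → H →L[ℂ] H
  T : Fin n → H →L[ℂ] H
  isometS : ∀ i i', star (S i) * S i' = if i = i' then 1 else 0
  isometT : ∀ j j', star (T j) * T j' = if j = j' then 1 else 0
  comm : ∀ i j, S i * T j = T (θ (i, j)).2 * S (θ (i, j)).1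

namespace TwoGraphRep

variable {m n : ℕ} {θ : Equiv.Perm (Fin m × Fin n)} {H : Type*}
  [NormedAddCommGroup H] [InnerProductSpace ℂ H] [CompleteSpace H]

/-- A representation is of Cuntz type if both row-isometries are defect free. -/
def CuntzType (ρ : TwoGraphRep m n θ H) : Prop :=
  (∑ i, ρ.S i * star (ρ.S i)) = 1 ∧ (∑ j, ρ.T j * star (ρ.T j)) = 1

/-- The nonself-adjoint 2-graph algebra `𝔖`: the unital WOT-closed algebra generated by
the `S_i` and `T_j`. -/
def alg (ρ : TwoGraphRep m n θ H) : Set (H →L[ℂ] H) :=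
  genWotAlg (Set.range ρ.S ∪ Set.range ρ.T)

/-- The von Neumann algebra generated by the `S_i` and `T_j`: the WOT-closure of the
unital *-algebra they generate. -/
def vnAlg (ρ : TwoGraphRep m n θ H) : Set (H →L[ℂ] H) :=
  genWotAlg ((Set.range ρ.S ∪ Set.range ρ.T) ∪ star '' (Set.range ρ.S ∪ Set.range ρ.T))

/-- Wandering vector for the row-isometry `[S_u T_v : |u| = k, |v| = l]`. -/
def IsWanderingKL (ρ : TwoGraphRep m n θ H) (k l : ℕ) (ζ : H) : Prop :=
  ‖ζ‖ = 1 ∧ ∀ (p p' : ℕ) (u u' : List (Fin m)) (v v' : List (Fin n)),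
    u.length = p * k → v.length = p * l → u'.length = p' * k → v'.length = p' * l →
    ⟪(wordOp ρ.S u * wordOp ρ.T v) ζ, (wordOp ρ.S u' * wordOp ρ.T v') ζ⟫ =
      if u = u' ∧ v = v' then 1 else 0

/-- The range of the structure projection `P_{k,l}`: the orthogonal complement of the
closed linear span of the wandering vectors of `[S_u T_v : |u| = k, |v| = l]`. -/
def structSpaceKL (ρ : TwoGraphRep m n θ H) (k l : ℕ) : Submodule ℂ H :=
  ((Submodule.span ℂ {ζ : H | ρ.IsWanderingKL k l ζ}).topologicalClosure)ᗮ

/-- The range of the first structure projection `P = ⋀_{k,l>0} P_{k,l}`. -/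
def firstStructSpace (ρ : TwoGraphRep m n θ H) : Submodule ℂ H :=
  ⨅ (k : ℕ) (l : ℕ) (_ : 0 < k) (_ : 0 < l), ρ.structSpaceKL k l

/-- The row-isometry `[S_u T_v : |u| = k, |v| = l]`. -/
def rowKL (ρ : TwoGraphRep m n θ H) (k l : ℕ) :
    ((Fin k → Fin m) × (Fin l → Fin n)) → H →L[ℂ] H :=
  fun p => fnWordOp ρ.S p.1 * fnWordOp ρ.T p.2

/-- A wandering vector for the representation `(S,T)`. -/
def IsWanderingRep (ρ : TwoGraphRep m n θ H) (ζ : H) : Prop :=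
  ‖ζ‖ = 1 ∧ ∀ (u u' : List (Fin m)) (v v' : List (Fin n)),
    ⟪(wordOp ρ.S u * wordOp ρ.T v) ζ, (wordOp ρ.S u' * wordOp ρ.T v') ζ⟫ =
      if u = u' ∧ v = v' then 1 else 0

/-- The representation is irreducible: the only closed subspaces invariant under all
`S_i, T_j, S_i*, T_j*` are `⊥` and `⊤`. -/
def Irreducible (ρ : TwoGraphRep m n θ H) : Prop :=
  ∀ M : Submodule ℂ H, IsClosed (M : Set H) →
    (∀ i, ∀ x ∈ M, ρ.S i x ∈ M) → (∀ i, ∀ x ∈ M, star (ρ.S i) x ∈ M) →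
    (∀ j, ∀ x ∈ M, ρ.T j x ∈ M) → (∀ j, ∀ x ∈ M, star (ρ.T j) x ∈ M) →
    M = ⊥ ∨ M = ⊤

/-- The representation is atomic with standard basis `ξ`: every generator maps each basis
vector to a unimodular multiple of a basis vector. -/
def AtomicBasis {Λ : Type*} (ρ : TwoGraphRep m n θ H) (ξ : HilbertBasis Λ ℂ H) : Prop :=
  (∀ i t, ∃ (c : ℂ) (t' : Λ), ‖c‖ = 1 ∧ ρ.S i (ξ t) = c • ξ t') ∧
  (∀ j t, ∃ (c : ℂ) (t' : Λ), ‖c‖ = 1 ∧ ρ.T j (ξ t) = c • ξ t')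

/-- `x` has a blue ring: `S_u x ∈ 𝕋x` for some nonempty word `u`. -/
def HasBlueRing (ρ : TwoGraphRep m n θ H) (x : H) : Prop :=
  ∃ u : List (Fin m), u ≠ [] ∧ ∃ c : ℂ, ‖c‖ = 1 ∧ wordOp ρ.S u x = c • x

/-- `x` has a red ring: `T_v x ∈ 𝕋x` for some nonempty word `v`. -/
def HasRedRing (ρ : TwoGraphRep m n θ H) (x : H) : Prop :=
  ∃ v : List (Fin n), v ≠ [] ∧ ∃ c : ℂ, ‖c‖ = 1 ∧ wordOp ρ.T v x = c • x

/-- `x` has a mixed ring: `T_v S_u x ∈ 𝕋x` for some nonempty words `u`, `v`. -/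
def HasMixedRing (ρ : TwoGraphRep m n θ H) (x : H) : Prop :=
  ∃ (u : List (Fin m)) (v : List (Fin n)), u ≠ [] ∧ v ≠ [] ∧
    ∃ c : ℂ, ‖c‖ = 1 ∧ wordOp ρ.T v (wordOp ρ.S u x) = c • x

end TwoGraphRep

/-!
Call `x` absolutely continuous for a row-isometry `V` when `∑_w |⟪V_w x, y⟫|² ≤ C ‖y‖²` for some
`C` and all `y`. If the identity were not a WOT-limit of polynomials in `V` without constant term,
some finite ampliation of `V` would have a wandering vector, and its coordinates are absolutely
continuous; hence a row-isometry without nonzero absolutely continuous vectors is singular.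
Conversely, if the absolutely continuous vectors of a Cuntz row of at least two isometries are
dense, then there is a wandering vector, and as soon as there is one, small perturbations of it by
absolutely continuous vectors show that the wandering vectors span all of them.

Let `L` be the closed span of the absolutely continuous vectors of `[S_u T_v : |u| = k, |v| = l]`.
The `S_i` and `T_j` commute with this row up to relabelling, so `L` is invariant under them.
Dilation type leaves `L` without a nonzero subspace reducing the `(k, l)`-row, and since the degrees
`(a k, a l)` and `(b p, b q)` bound each other, without one reducing the `(p, q)`-row. By the Wold
decomposition `L` is then spanned by `(p, q)`-wandering vectors, which are orthogonal to every
singular summand `M` of the `(p, q)`-row. So `M` lies in the largest `(k, l)`-reducing subspace of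
`Lᗮ`, which contains no absolutely continuous vectors, hence is singular, hence zero.
-/

open scoped ENNReal NNReal Topology

section Words

variable {E ι : Type*} [NormedAddCommGroup E] [InnerProductSpace ℂ E]

@[simp] theorem wordOp_nil (V : ι → E →L[ℂ] E) : wordOp V [] = 1 := rfl

@[simp] theorem wordOp_singleton (V : ι → E →L[ℂ] E) (i : ι) : wordOp V [i] = V i := by
  simp [wordOp]

theorem wordOp_cons (V : ι → E →L[ℂ] E) (i : ι) (w : List ι) :
    wordOp V (i :: w) = V i * wordOp V w := by
  simp [wordOp]

theorem wordOp_append (V : ι → E →L[ℂ] E) (w w' : List ι) :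
    wordOp V (w ++ w') = wordOp V w * wordOp V w' := by
  simp [wordOp]

theorem wordOp_cons_apply (V : ι → E →L[ℂ] E) (i : ι) (w : List ι) (x : E) :
    wordOp V (i :: w) x = V i (wordOp V w x) := by
  simp [wordOp_cons]

theorem wordOp_append_apply (V : ι → E →L[ℂ] E) (w w' : List ι) (x : E) :
    wordOp V (w ++ w') x = wordOp V w (wordOp V w' x) := by
  simp [wordOp_append]

theorem wordOp_apply_mem {V : ι → E →L[ℂ] E} {L : Submodule ℂ E}
    (hL : ∀ i, ∀ x ∈ L, V i x ∈ L) (w : List ι) {x : E} (hx : x ∈ L) : wordOp V w x ∈ L := by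
  induction w with
  | nil => simpa
  | cons i w ih => rw [wordOp_cons_apply]; exact hL i _ ih

variable [CompleteSpace E]

theorem inner_star_left (A : E →L[ℂ] E) (x y : E) : ⟪star A x, y⟫ = ⟪x, A y⟫ := by
  rw [ContinuousLinearMap.star_eq_adjoint, ContinuousLinearMap.adjoint_inner_left]

theorem inner_star_right (A : E →L[ℂ] E) (x y : E) : ⟪x, star A y⟫ = ⟪A x, y⟫ := by
  rw [ContinuousLinearMap.star_eq_adjoint, ContinuousLinearMap.adjoint_inner_right]

theorem star_wordOp_cons_apply (V : ι → E →L[ℂ] E) (i : ι) (w : List ι) (x : E) :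
    star (wordOp V (i :: w)) x = star (wordOp V w) (star (V i) x) := by
  simp [wordOp_cons]

end Words

section RowIsometry

variable {E ι : Type*} [NormedAddCommGroup E] [InnerProductSpace ℂ E] {V : ι → E →L[ℂ] E}

/-- `V` is a row-isometry: the `V i` are isometries with pairwise orthogonal ranges. It is stated
with inner products so that it makes sense before completeness provides adjoints. -/
def IsRowIsometry (V : ι → E →L[ℂ] E) : Prop :=
  ∀ i j x y, ⟪V i x, V j y⟫ = if i = j then ⟪x, y⟫ else 0

/-- A Cuntz row: a row-isometry whose ranges span the whole space (defect zero). -/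
structure IsCuntzRow [CompleteSpace E] [Fintype ι] (V : ι → E →L[ℂ] E) : Prop where
  isRowIsometry : IsRowIsometry V
  sum_map_star : ∀ x, ∑ i, V i (star (V i) x) = x

namespace IsRowIsometry

theorem inner_map_map (hV : IsRowIsometry V) (i : ι) (x y : E) : ⟪V i x, V i y⟫ = ⟪x, y⟫ := by
  simpa using hV i i x y

theorem inner_map_of_ne (hV : IsRowIsometry V) {i j : ι} (h : i ≠ j) (x y : E) :
    ⟪V i x, V j y⟫ = 0 := by
  simpa [h] using hV i j x y

theorem inner_wordOp (hV : IsRowIsometry V) (w : List ι) (x y : E) :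
    ⟪wordOp V w x, wordOp V w y⟫ = ⟪x, y⟫ := by
  induction w with
  | nil => simp
  | cons i w ih => rw [wordOp_cons_apply, wordOp_cons_apply, hV.inner_map_map, ih]

theorem norm_wordOp (hV : IsRowIsometry V) (w : List ι) (x : E) : ‖wordOp V w x‖ = ‖x‖ := by
  rw [@norm_eq_sqrt_re_inner ℂ, hV.inner_wordOp, ← @norm_eq_sqrt_re_inner ℂ]

theorem norm_map (hV : IsRowIsometry V) (i : ι) (x : E) : ‖V i x‖ = ‖x‖ := by
  simpa using hV.norm_wordOp [i] x

variable [CompleteSpace E]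

theorem star_apply_self (hV : IsRowIsometry V) (i : ι) (x : E) : star (V i) (V i x) = x :=
  ext_inner_right ℂ fun y => by rw [inner_star_left, hV.inner_map_map]

theorem star_apply_of_ne (hV : IsRowIsometry V) {i j : ι} (h : i ≠ j) (x : E) :
    star (V i) (V j x) = 0 :=
  ext_inner_right ℂ fun y => by rw [inner_star_left, hV.inner_map_of_ne h.symm, inner_zero_left]

end IsRowIsometry

namespace IsCuntzRow

variable [CompleteSpace E] [Fintype ι]

theorem sum_inner_star (hV : IsCuntzRow V) (x y : E) :
    ∑ i, ⟪star (V i) x, star (V i) y⟫ = ⟪x, y⟫ := by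
  conv_rhs => rw [← hV.sum_map_star y, inner_sum]
  simp [inner_star_left]

theorem sum_enorm_star_sq (hV : IsCuntzRow V) (x : E) :
    ∑ i, ‖star (V i) x‖ₑ ^ 2 = ‖x‖ₑ ^ 2 := by
  have parseval : ∑ i, ‖star (V i) x‖ ^ 2 = ‖x‖ ^ 2 := by
    have h := hV.sum_inner_star x x
    simp only [inner_self_eq_norm_sq_to_K] at h
    exact_mod_cast h
  simp only [← ofReal_norm, ← ENNReal.ofReal_pow (norm_nonneg _)]
  rw [← ENNReal.ofReal_sum_of_nonneg fun i _ => by positivity, parseval]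

end IsCuntzRow

end RowIsometry

section Wandering

variable {E ι : Type*} [NormedAddCommGroup E] [InnerProductSpace ℂ E] {V : ι → E →L[ℂ] E}

theorem IsWandering.map (hV : IsRowIsometry V) {ζ : E} (h : IsWandering V ζ) (i : ι) :
    IsWandering V (V i ζ) := by
  refine ⟨by rw [hV.norm_map, h.1], fun w w' => ?_⟩
  simpa [wordOp_append_apply] using h.2 (w ++ [i]) (w' ++ [i])

theorem IsRowIsometry.isWandering_of_forall_ne_nil (hV : IsRowIsometry V) {ζ : E}
    (hnorm : ‖ζ‖ = 1) (h : ∀ w : List ι, w ≠ [] → ⟪wordOp V w ζ, ζ⟫ = 0) : IsWandering V ζ := by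
  refine ⟨hnorm, fun w => ?_⟩
  induction w with
  | nil =>
    rintro (_ | ⟨j, w'⟩)
    · simp [hnorm]
    · rw [← inner_conj_symm]
      simp [h (j :: w') (by simp)]
  | cons i w ih =>
    rintro (_ | ⟨j, w'⟩)
    · simpa using h (i :: w) (by simp)
    · rw [wordOp_cons_apply, wordOp_cons_apply, hV i j]
      by_cases hij : i = j
      · simp [hij, ih w']
      · simp [hij]

theorem IsRowIsometry.isWandering_normalize (hV : IsRowIsometry V) {ζ : E} (hζ : ζ ≠ 0)
    (h : ∀ w : List ι, w ≠ [] → ⟪wordOp V w ζ, ζ⟫ = 0) :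
    IsWandering V ((‖ζ‖⁻¹ : ℂ) • ζ) :=
  hV.isWandering_of_forall_ne_nil (norm_smul_inv_norm hζ) fun w hw => by
    simp [h w hw]

/-- The closed linear span of the vectors `V_w x` with `d ≤ |w|`. For `d = 1` this is the span of
the proper orbit of `x`, and the component of `x` orthogonal to it is wandering up to
normalization. -/
def orbitSpan (V : ι → E →L[ℂ] E) (d : ℕ) (x : E) : Submodule ℂ E :=
  (Submodule.span ℂ ((fun w => wordOp V w x) '' {w | d ≤ w.length})).topologicalClosure

theorem isClosed_orbitSpan (V : ι → E →L[ℂ] E) (d : ℕ) (x : E) :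
    IsClosed (orbitSpan V d x : Set E) :=
  Submodule.isClosed_topologicalClosure _

theorem wordOp_mem_orbitSpan (V : ι → E →L[ℂ] E) (x : E) {d : ℕ} {w : List ι}
    (hw : d ≤ w.length) : wordOp V w x ∈ orbitSpan V d x :=
  Submodule.le_topologicalClosure _ (Submodule.subset_span ⟨w, hw, rfl⟩)

theorem orbitSpan_le {d : ℕ} {x : E} {N : Submodule ℂ E} (hN : IsClosed (N : Set E))
    (h : ∀ w : List ι, d ≤ w.length → wordOp V w x ∈ N) : orbitSpan V d x ≤ N :=
  Submodule.topologicalClosure_minimal _ (Submodule.span_le.2 (Set.image_subset_iff.2 h)) hN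

theorem map_mem_orbitSpan_succ (i : ι) {d : ℕ} {x z : E} (hz : z ∈ orbitSpan V d x) :
    V i z ∈ orbitSpan V (d + 1) x := by
  have hclosed : IsClosed ((orbitSpan V (d + 1) x).comap (V i).toLinearMap : Set E) :=
    (isClosed_orbitSpan V (d + 1) x).preimage (V i).continuous
  refine orbitSpan_le hclosed (fun w hw => ?_) hz
  rw [Submodule.mem_comap, ContinuousLinearMap.coe_coe, ← wordOp_cons_apply]
  exact wordOp_mem_orbitSpan V x (by simpa)

theorem map_mem_orbitSpan (i : ι) {d : ℕ} {x z : E} (hz : z ∈ orbitSpan V d x) :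
    V i z ∈ orbitSpan V d x :=
  orbitSpan_le (isClosed_orbitSpan V d x)
    (fun _ hw => wordOp_mem_orbitSpan V x (d.le_succ.trans hw)) (map_mem_orbitSpan_succ i hz)

theorem IsRowIsometry.exists_isWandering_of_inner_eq_zero [CompleteSpace E]
    (hV : IsRowIsometry V) {x y : E} (h : ∀ w : List ι, w ≠ [] → ⟪wordOp V w x, y⟫ = 0)
    (hxy : ⟪x, y⟫ ≠ 0) : ∃ ζ, IsWandering V ζ := by
  set U := orbitSpan V 1 x
  have : CompleteSpace U := (isClosed_orbitSpan V 1 x).completeSpace_coe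
  have hU_le : U ≤ (ℂ ∙ y)ᗮ := orbitSpan_le (Submodule.isClosed_orthogonal _) fun w hw =>
    Submodule.mem_orthogonal_singleton_iff_inner_left.2 (h w (List.length_pos_iff.1 hw))
  have hxU : x ∉ U := fun hx =>
    hxy (Submodule.mem_orthogonal_singleton_iff_inner_left.1 (hU_le hx))
  have hdefect : x - U.starProjection x ≠ 0 := fun h0 =>
    hxU (sub_eq_zero.1 h0 ▸ Submodule.starProjection_apply_mem U x)
  refine ⟨_, hV.isWandering_normalize hdefect fun w hw => ?_⟩
  refine (Submodule.mem_orthogonal U _).1 (Submodule.sub_starProjection_mem_orthogonal x) _ ?_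
  rw [map_sub]
  exact U.sub_mem (wordOp_mem_orbitSpan V x (List.length_pos_iff.2 hw))
    (wordOp_apply_mem (fun i _ => map_mem_orbitSpan i) w (Submodule.starProjection_apply_mem U x))

end Wandering

section Reducing

variable {E ι : Type*} [NormedAddCommGroup E] [InnerProductSpace ℂ E] [CompleteSpace E]
  {V : ι → E →L[ℂ] E} {L M : Submodule ℂ E}

/-- The subspace `M` reduces the family `V`: it is invariant under every `V i` and every
adjoint. -/
structure Reduces (V : ι → E →L[ℂ] E) (M : Submodule ℂ E) : Prop where
  map_mem : ∀ i, ∀ x ∈ M, V i x ∈ M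
  star_mem : ∀ i, ∀ x ∈ M, star (V i) x ∈ M

theorem Reduces.star_wordOp_mem (hM : Reduces V M) (w : List ι) {x : E} (hx : x ∈ M) :
    star (wordOp V w) x ∈ M := by
  induction w generalizing x with
  | nil => simpa
  | cons i w ih => rw [star_wordOp_cons_apply]; exact ih (hM.star_mem i _ hx)

/-- The largest subspace of `L` reducing the row-isometry `V`. -/
def reducingCore (V : ι → E →L[ℂ] E) (L : Submodule ℂ E) : Submodule ℂ E :=
  ⨅ (w : List ι) (w' : List ι), L.comap (wordOp V w * star (wordOp V w')).toLinearMap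

theorem mem_reducingCore {y : E} :
    y ∈ reducingCore V L ↔ ∀ w w', wordOp V w (star (wordOp V w') y) ∈ L := by
  simp [reducingCore]

theorem reducingCore_le : reducingCore V L ≤ L := fun y hy => by
  simpa using mem_reducingCore.1 hy [] []

theorem isClosed_reducingCore (hL : IsClosed (L : Set E)) :
    IsClosed (reducingCore V L : Set E) := by
  simp only [reducingCore, Submodule.coe_iInf]
  exact isClosed_iInter fun w => isClosed_iInter fun w' =>
    hL.preimage (wordOp V w * star (wordOp V w')).continuous

theorem mem_reducingCore_of_invariant (hL : ∀ i, ∀ x ∈ L, V i x ∈ L) {y : E}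
    (h : ∀ w, star (wordOp V w) y ∈ L) : y ∈ reducingCore V L :=
  mem_reducingCore.2 fun w w' => wordOp_apply_mem hL w (h w')

theorem IsRowIsometry.reduces_reducingCore (hV : IsRowIsometry V) (L : Submodule ℂ E) :
    Reduces V (reducingCore V L) where
  map_mem i y hy := by
    rw [mem_reducingCore] at hy ⊢
    rintro w (_ | ⟨j, w'⟩)
    · simpa [wordOp_append] using hy (w ++ [i]) []
    · rw [star_wordOp_cons_apply]
      by_cases hji : j = i
      · rw [hji, hV.star_apply_self]
        exact hy w w'
      · simp [hV.star_apply_of_ne hji]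
  star_mem i y hy := mem_reducingCore.2 fun w w' => by
    rw [← star_wordOp_cons_apply]
    exact mem_reducingCore.1 hy w (i :: w')

end Reducing

section Wold

variable {E ι : Type*} [NormedAddCommGroup E] [InnerProductSpace ℂ E] [CompleteSpace E]
  {V : ι → E →L[ℂ] E} {L : Submodule ℂ E}

/-- The subspace `⨁ V_i L` of an ambient Cuntz row, encoded as the set of vectors all of whose
coordinates `V_i^* z` lie in `L`. -/
def rangeSum (V : ι → E →L[ℂ] E) (L : Submodule ℂ E) : Submodule ℂ E :=
  ⨅ i, L.comap (star (V i)).toLinearMap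

theorem mem_rangeSum {z : E} : z ∈ rangeSum V L ↔ ∀ i, star (V i) z ∈ L := by
  simp [rangeSum]

theorem isClosed_rangeSum (hL : IsClosed (L : Set E)) : IsClosed (rangeSum V L : Set E) := by
  simp only [rangeSum, Submodule.coe_iInf]
  exact isClosed_iInter fun i => hL.preimage (star (V i)).continuous

theorem IsRowIsometry.map_mem_rangeSum (hV : IsRowIsometry V) (i : ι) {z : E} (hz : z ∈ L) :
    V i z ∈ rangeSum V L := mem_rangeSum.2 fun j => by
  by_cases hji : j = i
  · rwa [hji, hV.star_apply_self]
  · simp [hV.star_apply_of_ne hji]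

variable [Fintype ι]

theorem IsCuntzRow.rangeSum_le (hV : IsCuntzRow V) (hL : ∀ i, ∀ x ∈ L, V i x ∈ L) :
    rangeSum V L ≤ L := fun z hz => by
  rw [← hV.sum_map_star z]
  exact L.sum_mem fun i _ => hL i _ (mem_rangeSum.1 hz i)

theorem IsCuntzRow.mem_rangeSum_of_orthogonal_wandering (hV : IsCuntzRow V)
    (hLc : IsClosed (L : Set E)) (hL : ∀ i, ∀ x ∈ L, V i x ∈ L) {y : E} (hy : y ∈ L)
    (hort : ∀ ζ ∈ L, IsWandering V ζ → ⟪ζ, y⟫ = 0) : y ∈ rangeSum V L := by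
  have : CompleteSpace (rangeSum V L) := (isClosed_rangeSum hLc).completeSpace_coe
  set P := (rangeSum V L).starProjection
  have hPy : P y ∈ rangeSum V L := Submodule.starProjection_apply_mem _ y
  have hdefect_mem : y - P y ∈ L := L.sub_mem hy (hV.rangeSum_le hL hPy)
  have hdefect_ort : ∀ z ∈ rangeSum V L, ⟪z, y - P y⟫ = 0 :=
    (Submodule.mem_orthogonal _ _).1 (Submodule.sub_starProjection_mem_orthogonal y)
  suffices hdefect : y - P y = 0 by rwa [sub_eq_zero.1 hdefect]
  by_contra hne
  have hwandering := hV.isRowIsometry.isWandering_normalize hne fun w hw => by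
    obtain ⟨i, w, rfl⟩ := List.exists_cons_of_ne_nil hw
    rw [wordOp_cons_apply]
    exact hdefect_ort _ (hV.isRowIsometry.map_mem_rangeSum i (wordOp_apply_mem hL w hdefect_mem))
  have hdefect_y : ⟪y - P y, y⟫ = 0 := by
    simpa [inner_smul_left, hne] using hort _ (L.smul_mem _ hdefect_mem) hwandering
  refine hne (inner_self_eq_zero (𝕜 := ℂ).1 ?_)
  rw [inner_sub_right, hdefect_y, ← inner_conj_symm, hdefect_ort _ hPy]
  simp

theorem IsCuntzRow.mem_reducingCore_of_orthogonal_wandering (hV : IsCuntzRow V)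
    (hLc : IsClosed (L : Set E)) (hL : ∀ i, ∀ x ∈ L, V i x ∈ L) {y : E} (hy : y ∈ L)
    (hort : ∀ ζ ∈ L, IsWandering V ζ → ⟪ζ, y⟫ = 0) : y ∈ reducingCore V L := by
  refine mem_reducingCore_of_invariant hL fun w => ?_
  induction w generalizing y with
  | nil => simpa
  | cons i w ih =>
    rw [star_wordOp_cons_apply]
    refine ih (mem_rangeSum.1 (hV.mem_rangeSum_of_orthogonal_wandering hLc hL hy hort) i)
      fun ζ hζ hw => ?_
    rw [inner_star_right]
    exact hort _ (hL i _ hζ) (hw.map hV.isRowIsometry i)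

theorem IsCuntzRow.eq_closure_span_wandering (hV : IsCuntzRow V)
    (hLc : IsClosed (L : Set E)) (hL : ∀ i, ∀ x ∈ L, V i x ∈ L) (hcore : reducingCore V L = ⊥) :
    L = (Submodule.span ℂ {ζ : E | ζ ∈ L ∧ IsWandering V ζ}).topologicalClosure := by
  set W := (Submodule.span ℂ {ζ : E | ζ ∈ L ∧ IsWandering V ζ}).topologicalClosure
  have hWL : W ≤ L :=
    Submodule.topologicalClosure_minimal _ (Submodule.span_le.2 fun ζ hζ => hζ.1) hLc
  have : CompleteSpace W := (Submodule.isClosed_topologicalClosure _).completeSpace_coe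
  refine le_antisymm (fun y hy => ?_) hWL
  have hdefect : y - W.starProjection y ∈ reducingCore V L := by
    refine hV.mem_reducingCore_of_orthogonal_wandering hLc hL
      (L.sub_mem hy (hWL (Submodule.starProjection_apply_mem W y))) fun ζ hζ hw => ?_
    refine (Submodule.mem_orthogonal W _).1 (Submodule.sub_starProjection_mem_orthogonal y) ζ ?_
    exact Submodule.le_topologicalClosure _ (Submodule.subset_span ⟨hζ, hw⟩)
  rw [hcore, Submodule.mem_bot, sub_eq_zero] at hdefect
  exact hdefect ▸ Submodule.starProjection_apply_mem W y

end Wold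

section SquareSums

theorem tsum_list_eq {ι : Type*} (f : List ι → ℝ≥0∞) :
    ∑' w, f w = f [] + ∑' i, ∑' w, f (i :: w) := by
  let e : Unit ⊕ (ι × List ι) ≃ List ι :=
    { toFun := fun o => o.elim (fun _ => []) fun p => p.1 :: p.2
      invFun := fun w => match w with
        | [] => Sum.inl ()
        | i :: w => Sum.inr (i, w)
      left_inv := by rintro (_ | ⟨i, w⟩) <;> rfl
      right_inv := by rintro (_ | ⟨i, w⟩) <;> rfl }
  rw [← e.tsum_eq, Summable.tsum_sum ENNReal.summable ENNReal.summable,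
    ENNReal.summable.tsum_prod' fun _ => ENNReal.summable, tsum_fintype]
  simp [e]

theorem exists_tsum_length_le {ι : Type*} {f : List ι → ℝ≥0∞} (hf : ∑' w, f w ≠ ⊤) {ε : ℝ≥0∞}
    (hε : 0 < ε) : ∃ d : ℕ, ∑' w : List ι, (if d ≤ w.length then f w else 0) ≤ ε := by
  obtain ⟨s, hs⟩ :=
    ((ENNReal.tendsto_tsum_compl_atTop_zero hf).eventually (gt_mem_nhds hε)).exists
  refine ⟨s.sup List.length + 1, le_trans ?_ hs.le⟩
  rw [show ∑' b : {w // w ∉ s}, f b = _ from tsum_subtype {w | w ∉ s} f]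
  refine ENNReal.tsum_le_tsum fun w => ?_
  by_cases hw : w ∈ s
  · have : w.length ≤ s.sup List.length := Finset.le_sup hw
    rw [if_neg (by omega)]
    exact zero_le
  · rw [Set.indicator_of_mem (show w ∈ {w | w ∉ s} from hw)]
    split_ifs <;> simp

theorem enorm_sum_sq_le {β F : Type*} [NormedAddCommGroup F] (s : Finset β) (f : β → F) :
    ‖∑ b ∈ s, f b‖ₑ ^ 2 ≤ s.card * ∑ b ∈ s, ‖f b‖ₑ ^ 2 := by
  have hpow := ENNReal.rpow_sum_le_const_mul_sum_rpow s (fun b => ‖f b‖ₑ) (one_le_two (α := ℝ))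
  norm_num at hpow
  exact (pow_le_pow_left' (enorm_sum_le s f) 2).trans hpow

theorem enorm_add_sq_le {F : Type*} [NormedAddCommGroup F] (a b : F) :
    ‖a + b‖ₑ ^ 2 ≤ 2 * ‖a‖ₑ ^ 2 + 2 * ‖b‖ₑ ^ 2 := by
  simpa [mul_add] using enorm_sum_sq_le Finset.univ ![a, b]

/-- The square of the `ℓ²`-norm of a family of complex numbers, valued in `[0, ∞]` so that no
summability has to be carried along. -/
def sqSum {α : Type*} (f : α → ℂ) : ℝ≥0∞ := ∑' a, ‖f a‖ₑ ^ 2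

theorem sqSum_sum_le {α β : Type*} (s : Finset β) (f : β → α → ℂ) :
    sqSum (fun a => ∑ b ∈ s, f b a) ≤ s.card * ∑ b ∈ s, sqSum (f b) := by
  unfold sqSum
  rw [← Summable.tsum_finsetSum fun _ _ => ENNReal.summable, ← ENNReal.tsum_mul_left]
  exact ENNReal.tsum_le_tsum fun a => enorm_sum_sq_le s fun b => f b a

theorem sqSum_add_le {α : Type*} (f g : α → ℂ) :
    sqSum (fun a => f a + g a) ≤ 2 * sqSum f + 2 * sqSum g := by
  simpa [mul_add] using sqSum_sum_le Finset.univ ![f, g]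

theorem sqSum_const_mul {α : Type*} (c : ℂ) (f : α → ℂ) :
    sqSum (fun a => c * f a) = ‖c‖ₑ ^ 2 * sqSum f := by
  simp [sqSum, ← ENNReal.tsum_mul_left, mul_pow]

end SquareSums

section OrbitSum

variable {E ι : Type*} [NormedAddCommGroup E] [InnerProductSpace ℂ E] {V : ι → E →L[ℂ] E}

/-- The square of the `ℓ²`-norm of the coefficients of `y` along the orbit of `x`. -/
def orbitSum (V : ι → E →L[ℂ] E) (x y : E) : ℝ≥0∞ :=
  sqSum fun w => ⟪wordOp V w x, y⟫

/-- The part of `orbitSum` supported on words of length at least `d`. -/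
def orbitTail (V : ι → E →L[ℂ] E) (d : ℕ) (x y : E) : ℝ≥0∞ :=
  ∑' w : List ι, if d ≤ w.length then ‖⟪wordOp V w x, y⟫‖ₑ ^ 2 else 0

theorem orbitSum_zero_left (y : E) : orbitSum V 0 y = 0 := by
  simp [orbitSum, sqSum]

theorem orbitSum_zero_right (x : E) : orbitSum V x 0 = 0 := by
  simp [orbitSum, sqSum]

theorem orbitSum_add_left (x x' y : E) :
    orbitSum V (x + x') y ≤ 2 * orbitSum V x y + 2 * orbitSum V x' y := by
  simp only [orbitSum, map_add, inner_add_left]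
  exact sqSum_add_le _ _

theorem orbitSum_add_right (x y y' : E) :
    orbitSum V x (y + y') ≤ 2 * orbitSum V x y + 2 * orbitSum V x y' := by
  simp only [orbitSum, inner_add_right]
  exact sqSum_add_le _ _

theorem orbitSum_smul_left (c : ℂ) (x y : E) :
    orbitSum V (c • x) y = ‖c‖ₑ ^ 2 * orbitSum V x y := by
  simp only [orbitSum, map_smul, inner_smul_left, sqSum_const_mul, RCLike.enorm_conj]

theorem orbitSum_smul_right (c : ℂ) (x y : E) :
    orbitSum V x (c • y) = ‖c‖ₑ ^ 2 * orbitSum V x y := by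
  simp only [orbitSum, inner_smul_right, sqSum_const_mul]

theorem enorm_inner_sq_le_orbitSum (x y : E) : ‖⟪x, y⟫‖ₑ ^ 2 ≤ orbitSum V x y := by
  simpa [orbitSum, sqSum] using ENNReal.le_tsum (f := fun w => ‖⟪wordOp V w x, y⟫‖ₑ ^ 2) []

theorem orbitTail_zero (x y : E) : orbitTail V 0 x y = orbitSum V x y := by
  simp [orbitTail, orbitSum, sqSum]

theorem orbitTail_anti {d d' : ℕ} (h : d ≤ d') (x y : E) :
    orbitTail V d' x y ≤ orbitTail V d x y :=
  ENNReal.tsum_le_tsum fun w => by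
    split_ifs with hd' hd
    exacts [le_rfl, absurd (h.trans hd') hd, zero_le, le_rfl]

theorem exists_orbitTail_le {x y : E} (h : orbitSum V x y ≠ ⊤) {ε : ℝ≥0∞} (hε : 0 < ε) :
    ∃ d, orbitTail V d x y ≤ ε :=
  exists_tsum_length_le h hε

theorem orbitSum_wordOp_left_le_orbitTail (w : List ι) (x y : E) :
    orbitSum V (wordOp V w x) y ≤ orbitTail V w.length x y := by
  have hinj : Function.Injective fun v : List ι => v ++ w := fun a b h => by simpa using h
  simpa [orbitSum, sqSum, orbitTail, wordOp_append_apply] using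
    ENNReal.tsum_comp_le_tsum_of_injective hinj fun v : List ι =>
      if w.length ≤ v.length then ‖⟪wordOp V v x, y⟫‖ₑ ^ 2 else 0

theorem orbitSum_wordOp_left_le (w : List ι) (x y : E) :
    orbitSum V (wordOp V w x) y ≤ orbitSum V x y :=
  (orbitSum_wordOp_left_le_orbitTail w x y).trans
    ((orbitTail_anti (Nat.zero_le _) x y).trans (orbitTail_zero x y).le)

section Complete

variable [CompleteSpace E]

theorem orbitSum_eq (x y : E) :
    orbitSum V x y = ‖⟪x, y⟫‖ₑ ^ 2 + ∑' i, orbitSum V x (star (V i) y) := by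
  simp only [orbitSum, sqSum]
  rw [tsum_list_eq]
  simp [wordOp_cons_apply, inner_star_right]

theorem orbitTail_succ (d : ℕ) (x y : E) :
    orbitTail V (d + 1) x y = ∑' i, orbitTail V d x (star (V i) y) := by
  simp only [orbitTail]
  rw [tsum_list_eq]
  simp [wordOp_cons_apply, inner_star_right]

theorem IsRowIsometry.orbitSum_map_right (hV : IsRowIsometry V) (i : ι) (x y : E) :
    orbitSum V x (V i y) = ‖⟪x, V i y⟫‖ₑ ^ 2 + orbitSum V x y := by
  rw [orbitSum_eq, tsum_eq_single i fun j hj => by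
    rw [hV.star_apply_of_ne hj, orbitSum_zero_right], hV.star_apply_self]

end Complete

/-- `x` is absolutely continuous for `V`: its coefficient map `y ↦ (⟪V_w x, y⟫)_w` is a bounded
operator into `ℓ²`. -/
def IsAbsCont (V : ι → E →L[ℂ] E) (x : E) : Prop :=
  ∃ C : ℝ≥0, ∀ y, orbitSum V x y ≤ C * ‖y‖ₑ ^ 2

namespace IsAbsCont

theorem orbitSum_ne_top {x : E} (hx : IsAbsCont V x) (y : E) : orbitSum V x y ≠ ⊤ := by
  obtain ⟨C, hC⟩ := hx
  exact ne_top_of_le_ne_top (by finiteness) (hC y)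

theorem zero : IsAbsCont V 0 := ⟨0, fun y => by simp [orbitSum_zero_left]⟩

theorem add {x x' : E} (hx : IsAbsCont V x) (hx' : IsAbsCont V x') : IsAbsCont V (x + x') := by
  obtain ⟨C, hC⟩ := hx
  obtain ⟨C', hC'⟩ := hx'
  refine ⟨2 * C + 2 * C', fun y => (orbitSum_add_left x x' y).trans ?_⟩
  push_cast
  rw [add_mul, mul_assoc, mul_assoc]
  gcongr
  · exact hC y
  · exact hC' y

theorem smul (c : ℂ) {x : E} (hx : IsAbsCont V x) : IsAbsCont V (c • x) := by
  obtain ⟨C, hC⟩ := hx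
  refine ⟨‖c‖₊ ^ 2 * C, fun y => ?_⟩
  rw [orbitSum_smul_left]
  push_cast
  rw [mul_assoc, ← enorm_eq_nnnorm]
  gcongr
  exact hC y

theorem wordOp_apply (w : List ι) {x : E} (hx : IsAbsCont V x) : IsAbsCont V (wordOp V w x) := by
  obtain ⟨C, hC⟩ := hx
  exact ⟨C, fun y => (orbitSum_wordOp_left_le w x y).trans (hC y)⟩

theorem map (i : ι) {x : E} (hx : IsAbsCont V x) : IsAbsCont V (V i x) := by
  simpa using hx.wordOp_apply [i]

end IsAbsCont

/-- The submodule of absolutely continuous vectors of `V`. -/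
def absContSubmodule (V : ι → E →L[ℂ] E) : Submodule ℂ E where
  carrier := {x | IsAbsCont V x}
  zero_mem' := IsAbsCont.zero
  add_mem' := IsAbsCont.add
  smul_mem' c _ hx := IsAbsCont.smul c hx

theorem IsWandering.isAbsCont {ζ : E} (h : IsWandering V ζ) : IsAbsCont V ζ := by
  have horth : Orthonormal ℂ fun w => wordOp V w ζ := orthonormal_iff_ite.2 h.2
  refine ⟨1, fun y => ?_⟩
  rw [orbitSum, sqSum]
  simp only [← ofReal_norm, ← ENNReal.ofReal_pow (norm_nonneg _)]
  rw [← ENNReal.ofReal_tsum_of_nonneg (fun _ => by positivity) (horth.inner_products_summable y)]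
  simpa using ENNReal.ofReal_le_ofReal (horth.tsum_inner_products_le y)

end OrbitSum

section WeakOperatorTopology

variable {E : Type*} [NormedAddCommGroup E] [InnerProductSpace ℂ E] {S S' : Set (E →L[ℂ] E)}
  {A B : E →L[ℂ] E}

theorem subset_wotClosure (S : Set (E →L[ℂ] E)) : S ⊆ wotClosure S :=
  fun A hA _ hε _ => ⟨A, hA, fun _ _ => by simpa⟩

theorem map_mem_wotClosure {Φ : (E →L[ℂ] E) → (E →L[ℂ] E)}
    (hΦ : ∀ p : E × E, ∃ q : E × E, ∀ A B, ‖⟪p.1, (Φ A - Φ B) p.2⟫‖ = ‖⟪q.1, (A - B) q.2⟫‖)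
    (hS : ∀ B ∈ S, Φ B ∈ wotClosure S') (hA : A ∈ wotClosure S) : Φ A ∈ wotClosure S' := by
  intro ε hε F
  choose pull hpull using hΦ
  obtain ⟨B, hB, hAB⟩ := hA (ε / 2) (by positivity) (F.image pull)
  obtain ⟨C, hC, hBC⟩ := hS B hB (ε / 2) (by positivity) F
  refine ⟨C, hC, fun p hp => ?_⟩
  have hsplit : ⟪p.1, (Φ A - C) p.2⟫ = ⟪p.1, (Φ A - Φ B) p.2⟫ + ⟪p.1, (Φ B - C) p.2⟫ := by
    rw [← inner_add_right, ← add_apply, sub_add_sub_cancel]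
  rw [hsplit]
  refine (norm_add_le _ _).trans_lt ?_
  rw [hpull]
  linarith [hAB _ (Finset.mem_image_of_mem pull hp), hBC p hp]

theorem inner_eq_zero_of_mem_wotClosure {x y : E} (h : ∀ B ∈ S, ⟪x, B y⟫ = 0)
    (hA : A ∈ wotClosure S) : ⟪x, A y⟫ = 0 := by
  by_contra hne
  obtain ⟨B, hB, hlt⟩ := hA ‖⟪x, A y⟫‖ (norm_pos_iff.2 hne) {(x, y)}
  simpa [inner_sub_right, h B hB] using hlt (x, y) (Finset.mem_singleton_self _)

theorem add_mem_wotClosure {W : Submodule ℂ (E →L[ℂ] E)}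
    (hA : A ∈ wotClosure (W : Set (E →L[ℂ] E))) (hB : B ∈ wotClosure (W : Set (E →L[ℂ] E))) :
    A + B ∈ wotClosure (W : Set (E →L[ℂ] E)) := by
  refine map_mem_wotClosure (Φ := (· + B)) (fun p => ⟨p, by simp⟩) (fun A' hA' => ?_) hA
  refine map_mem_wotClosure (Φ := (A' + ·)) (fun p => ⟨p, by simp⟩) (fun B' hB' => ?_) hB
  exact subset_wotClosure _ (W.add_mem hA' hB')

variable [CompleteSpace E]

theorem mul_mem_wotClosure {W : Subalgebra ℂ (E →L[ℂ] E)}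
    (hA : A ∈ wotClosure (W : Set (E →L[ℂ] E))) (hB : B ∈ wotClosure (W : Set (E →L[ℂ] E))) :
    A * B ∈ wotClosure (W : Set (E →L[ℂ] E)) := by
  refine map_mem_wotClosure (Φ := (· * B)) (fun p => ⟨(p.1, B p.2), by simp⟩)
    (fun A' hA' => ?_) hA
  refine map_mem_wotClosure (Φ := (A' * ·))
    (fun p => ⟨(star A' p.1, p.2), by simp [inner_star_left]⟩) (fun B' hB' => ?_) hB
  exact subset_wotClosure _ (W.mul_mem hA' hB')

/-- The unital WOT-closed algebra `genWotAlg G`, bundled as a subalgebra. -/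
def genWotSubalgebra (G : Set (E →L[ℂ] E)) : Subalgebra ℂ (E →L[ℂ] E) where
  carrier := genWotAlg G
  add_mem' := add_mem_wotClosure (W := Subalgebra.toSubmodule (Algebra.adjoin ℂ G))
  mul_mem' := mul_mem_wotClosure
  algebraMap_mem' c := subset_wotClosure _ (Subalgebra.algebraMap_mem _ c)

theorem mem_genWotSubalgebra {G : Set (E →L[ℂ] E)} :
    A ∈ genWotSubalgebra G ↔ A ∈ genWotAlg G := Iff.rfl

theorem star_mem_genWotAlg {G : Set (E →L[ℂ] E)} (hG : ∀ A ∈ G, star A ∈ genWotAlg G)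
    (hA : A ∈ genWotAlg G) : star A ∈ genWotAlg G := by
  refine map_mem_wotClosure (Φ := star) (fun p => ⟨p.swap, fun A B => ?_⟩) (fun P hP => ?_) hA
  · rw [← star_sub, inner_star_right, norm_inner_symm, Prod.fst_swap, Prod.snd_swap]
  · rw [← genWotAlg, ← mem_genWotSubalgebra]
    induction hP using Algebra.adjoin_induction with
    | mem A hA => exact hG A hA
    | algebraMap c =>
      rw [← algebraMap_star_comm]
      exact Subalgebra.algebraMap_mem _ _
    | add A B _ _ hA hB => rw [star_add]; exact add_mem hA hB
    | mul A B _ _ hA hB => rw [star_mul]; exact mul_mem hB hA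

omit [CompleteSpace E] in
theorem exists_sum_inner_ne_zero_of_notMem_wotClosure {W : Submodule ℂ (E →L[ℂ] E)}
    (hA : A ∉ wotClosure (W : Set (E →L[ℂ] E))) :
    ∃ (F : Finset (E × E)) (y : F → E),
      (∀ B ∈ W, ∑ p : F, ⟪B p.1.2, y p⟫ = 0) ∧ ∑ p : F, ⟪A p.1.2, y p⟫ ≠ 0 := by
  simp only [wotClosure, Set.mem_ofPred_eq, not_forall] at hA
  obtain ⟨ε, hε, F, hF⟩ := hA
  let coeff : (E →L[ℂ] E) →ₗ[ℂ] (F → ℂ) :=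
    { toFun := fun B p => ⟪p.1.1, B p.1.2⟫
      map_add' := fun A B => by ext p; simp
      map_smul' := fun c A => by ext p; simp }
  have hnot : coeff A ∉ W.map coeff := by
    rintro ⟨B, hB, hBA⟩
    refine hF ⟨B, hB, fun p hp => ?_⟩
    have hcoeff : ⟪p.1, B p.2⟫ = ⟪p.1, A p.2⟫ := congrFun hBA ⟨p, hp⟩
    simpa [inner_sub_right, hcoeff] using hε
  obtain ⟨φ, hφA, hφW⟩ := Submodule.exists_le_ker_of_notMem hnot
  let c : F → ℂ := fun p => φ fun q => if p = q then 1 else 0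
  have hφ (B : E →L[ℂ] E) :
      ∑ p : F, ⟪B p.1.2, starRingEnd ℂ (c p) • p.1.1⟫ = starRingEnd ℂ (φ (coeff B)) := by
    rw [LinearMap.pi_apply_eq_sum_univ φ, map_sum]
    exact Finset.sum_congr rfl fun p _ => by simp [c, coeff, mul_comm]
  refine ⟨F, fun p => starRingEnd ℂ (c p) • p.1.1, fun B hB => ?_, ?_⟩
  · rw [hφ, show φ (coeff B) = 0 from hφW (Submodule.mem_map_of_mem hB), map_zero]
  · rwa [hφ, map_ne_zero]

end WeakOperatorTopology

section Ampliation

variable {E ι α : Type*} [NormedAddCommGroup E] [InnerProductSpace ℂ E] [Fintype α]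
  {V : ι → E →L[ℂ] E}

/-- The ampliation of `A` to the finite Hilbert sum `Eᵅ`, acting as `A` on each coordinate. It
turns a functional `B ↦ ∑ ⟪B x_a, y_a⟫` into a single vector functional. -/
def ampliation (α : Type*) [Fintype α] (A : E →L[ℂ] E) :
    PiLp 2 (fun _ : α => E) →L[ℂ] PiLp 2 (fun _ : α => E) :=
  ((PiLp.continuousLinearEquiv 2 ℂ fun _ : α => E).symm.toContinuousLinearMap.comp
    (ContinuousLinearMap.pi fun a => A.comp (ContinuousLinearMap.proj a))).comp
    (PiLp.continuousLinearEquiv 2 ℂ fun _ : α => E).toContinuousLinearMap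

@[simp] theorem ampliation_apply (A : E →L[ℂ] E) (x : PiLp 2 (fun _ : α => E)) (a : α) :
    ampliation α A x a = A (x a) := rfl

theorem wordOp_ampliation_apply (V : ι → E →L[ℂ] E) (w : List ι) (x : PiLp 2 (fun _ : α => E))
    (a : α) : wordOp (fun i => ampliation α (V i)) w x a = wordOp V w (x a) := by
  induction w with
  | nil => rfl
  | cons i w ih => rw [wordOp_cons_apply, wordOp_cons_apply, ampliation_apply, ih]

theorem isRowIsometry_ampliation (hV : IsRowIsometry V) :
    IsRowIsometry fun i => ampliation α (V i) := by
  intro i j x y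
  simp only [PiLp.inner_apply, ampliation_apply, hV i j]
  split_ifs <;> simp

theorem orbitSum_ampliation_single (x : PiLp 2 (fun _ : α => E)) (a : α) (y : E) :
    orbitSum (fun i => ampliation α (V i)) x (PiLp.single 2 a y) = orbitSum V (x a) y := by
  unfold orbitSum
  congr 1
  funext w
  rw [PiLp.inner_apply, Finset.sum_eq_single a (fun b _ hb => by simp [hb]) (by simp),
    wordOp_ampliation_apply]
  simp

theorem IsAbsCont.ampliation_coord {x : PiLp 2 (fun _ : α => E)}
    (hx : IsAbsCont (fun i => ampliation α (V i)) x) (a : α) : IsAbsCont V (x a) := by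
  obtain ⟨C, hC⟩ := hx
  refine ⟨C, fun y => ?_⟩
  have hnorm : ‖PiLp.single 2 (β := fun _ : α => E) a y‖ₑ = ‖y‖ₑ := by
    rw [← ofReal_norm, ← ofReal_norm, PiLp.norm_single]
  simpa [orbitSum_ampliation_single, hnorm] using hC (PiLp.single 2 a y)

end Ampliation

section SelfAdjoint

variable {E ι : Type*} [NormedAddCommGroup E] [InnerProductSpace ℂ E] {V : ι → E →L[ℂ] E}

/-- The unital WOT-closed algebra generated by `V` is self-adjoint, that is, `V` is singular. The
adjoint is described by its defining identity, so that `E` need not be complete. -/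
def IsSelfAdjointRow (V : ι → E →L[ℂ] E) : Prop :=
  ∀ A ∈ genWotAlg (Set.range V), ∃ B ∈ genWotAlg (Set.range V), ∀ x y, ⟪A x, y⟫ = ⟪x, B y⟫

theorem wordOp_mem_adjoin (V : ι → E →L[ℂ] E) (w : List ι) :
    wordOp V w ∈ Algebra.adjoin ℂ (Set.range V) := by
  induction w with
  | nil => exact one_mem _
  | cons i w ih => rw [wordOp_cons]; exact mul_mem (Algebra.subset_adjoin ⟨i, rfl⟩) ih

theorem apply_mem_of_mem_adjoin {L : Submodule ℂ E} (hL : ∀ i, ∀ x ∈ L, V i x ∈ L)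
    {A : E →L[ℂ] E} (hA : A ∈ Algebra.adjoin ℂ (Set.range V)) : ∀ x ∈ L, A x ∈ L := by
  induction hA using Algebra.adjoin_induction with
  | mem _ hA => obtain ⟨i, rfl⟩ := hA; exact hL i
  | algebraMap c =>
    exact fun x hx => by simpa [Algebra.algebraMap_eq_smul_one] using L.smul_mem c hx
  | add _ _ _ _ hA hB => exact fun x hx => L.add_mem (hA x hx) (hB x hx)
  | mul _ _ _ _ hA hB => exact fun x hx => hA _ (hB x hx)

theorem IsSelfAdjointRow.not_isWandering [Nonempty ι] (h : IsSelfAdjointRow V)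
    (hV : IsRowIsometry V) (ζ : E) : ¬ IsWandering V ζ := by
  intro hζ
  obtain ⟨i⟩ := ‹Nonempty ι›
  obtain ⟨B, hB, hadj⟩ := h (V i) (subset_wotClosure _ (Algebra.subset_adjoin ⟨i, rfl⟩))
  have horthogonal : orbitSpan V 1 ζ ≤ (ℂ ∙ ζ)ᗮ :=
    orbitSpan_le (Submodule.isClosed_orthogonal _) fun w hw =>
      Submodule.mem_orthogonal_singleton_iff_inner_left.2 <| by
        simpa [List.length_pos_iff.1 hw] using hζ.2 w []
  have hmap : V i ζ ∈ orbitSpan V 1 ζ := by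
    simpa using wordOp_mem_orbitSpan V ζ (w := [i]) le_rfl
  have hzero : ⟪ζ, B (V i ζ)⟫ = 0 := inner_eq_zero_of_mem_wotClosure (fun P hP =>
    Submodule.mem_orthogonal_singleton_iff_inner_right.1 <| horthogonal <|
      apply_mem_of_mem_adjoin (fun j _ => map_mem_orbitSpan j) hP _ hmap) hB
  rw [← hadj, hV.inner_map_map, inner_self_eq_zero] at hzero
  simpa [hzero] using hζ.1

/-- The span of the words of length at least one in `V`. -/
def properWordSpan (V : ι → E →L[ℂ] E) : Submodule ℂ (E →L[ℂ] E) :=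
  Submodule.span ℂ (wordOp V '' {w | w ≠ []})

variable [CompleteSpace E]

theorem IsRowIsometry.star_mul_mem_adjoin (hV : IsRowIsometry V) (i : ι) {B : E →L[ℂ] E}
    (hB : B ∈ properWordSpan V) : star (V i) * B ∈ Algebra.adjoin ℂ (Set.range V) := by
  induction hB using Submodule.span_induction with
  | mem B hB =>
    obtain ⟨w, hw, rfl⟩ := hB
    obtain ⟨j, w, rfl⟩ := List.exists_cons_of_ne_nil hw
    by_cases hij : i = j
    · convert wordOp_mem_adjoin V w using 1
      ext x
      simp [hij, wordOp_cons_apply, hV.star_apply_self]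
    · convert zero_mem (Algebra.adjoin ℂ (Set.range V)) using 1
      ext x
      simp [wordOp_cons_apply, hV.star_apply_of_ne hij]
  | zero => simp
  | add A B _ _ hA hB => rw [mul_add]; exact add_mem hA hB
  | smul c A _ hA => rw [mul_smul_comm]; exact Subalgebra.smul_mem _ hA c

theorem IsRowIsometry.isSelfAdjointRow_of_one_mem (hV : IsRowIsometry V)
    (hone : (1 : E →L[ℂ] E) ∈ wotClosure (properWordSpan V : Set (E →L[ℂ] E))) :
    IsSelfAdjointRow V := by
  have hstar (i : ι) : star (V i) ∈ genWotAlg (Set.range V) := by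
    rw [← mul_one (star (V i))]
    refine map_mem_wotClosure (Φ := (star (V i) * ·))
      (fun p => ⟨(V i p.1, p.2), fun A B => ?_⟩) (fun B hB => ?_) hone
    · rw [← mul_sub, mul_apply_eq_comp, inner_star_right]
    · exact subset_wotClosure _ (hV.star_mul_mem_adjoin i hB)
  exact fun A hA => ⟨star A, star_mem_genWotAlg (Set.forall_mem_range.2 hstar) hA,
    fun x y => (inner_star_right A x y).symm⟩

theorem IsRowIsometry.isSelfAdjointRow (hV : IsRowIsometry V)
    (h : ∀ x, IsAbsCont V x → x = 0) : IsSelfAdjointRow V := by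
  refine hV.isSelfAdjointRow_of_one_mem ?_
  by_contra hone
  obtain ⟨F, y, hproper, hne⟩ := exists_sum_inner_ne_zero_of_notMem_wotClosure hone
  have hinner (w : List ι) : ⟪wordOp (fun i => ampliation F (V i)) w
      (WithLp.toLp 2 fun p : F => p.1.2), WithLp.toLp 2 y⟫ =
        ∑ p : F, ⟪wordOp V w p.1.2, y p⟫ := by
    simp only [PiLp.inner_apply, wordOp_ampliation_apply]
  obtain ⟨ζ, hζ⟩ := (isRowIsometry_ampliation (α := F) hV).exists_isWandering_of_inner_eq_zero
    (fun w hw => (hinner w).trans (hproper _ (Submodule.subset_span ⟨w, hw, rfl⟩)))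
    ((hinner []).trans_ne hne)
  have hζ_zero : ζ = 0 := by
    ext p
    exact h _ (hζ.isAbsCont.ampliation_coord p)
  simpa [hζ_zero] using hζ.1

end SelfAdjoint

section Hooks

variable {E ι : Type*} [NormedAddCommGroup E] [InnerProductSpace ℂ E] {V : ι → E →L[ℂ] E}
  {i j : ι}

theorem IsRowIsometry.inner_wordOp_eq_zero (hV : IsRowIsometry V) {u v : List ι}
    (huv : ¬ u <+: v) (hvu : ¬ v <+: u) (x y : E) : ⟪wordOp V u x, wordOp V v y⟫ = 0 := by
  induction u generalizing v with
  | nil => exact absurd (List.nil_prefix) huv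
  | cons a u ih =>
    cases v with
    | nil => exact absurd (List.nil_prefix) hvu
    | cons b v =>
      rw [wordOp_cons_apply, wordOp_cons_apply, hV a b]
      split_ifs with hab
      · subst hab
        exact ih (by simpa using huv) (by simpa using hvu)
      · rfl

/-- The hook word `i⋯ij` with `k` letters `i`. No two distinct hook words are comparable for the
prefix order, and none overlaps itself, so that `V_{hook} b` is an almost wandering vector. -/
def hookWord (i j : ι) (k : ℕ) : List ι := List.replicate k i ++ [j]

@[simp] theorem length_hookWord (i j : ι) (k : ℕ) : (hookWord i j k).length = k + 1 := by
  simp [hookWord]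

theorem hookWord_succ (i j : ι) (k : ℕ) : hookWord i j (k + 1) = i :: hookWord i j k := rfl

theorem hookWord_ne_nil (i j : ι) (k : ℕ) : hookWord i j k ≠ [] := by
  simp [hookWord]

theorem getElem?_hookWord_of_lt {n k : ℕ} (h : n < k) : (hookWord i j k)[n]? = some i := by
  simp [hookWord, List.getElem?_append, h]

theorem getElem?_of_hookWord_prefix {k : ℕ} {w : List ι} (h : hookWord i j k <+: w) :
    w[k]? = some j := by
  obtain ⟨t, rfl⟩ := h
  simp [hookWord]

theorem eq_of_hookWord_prefix (hij : i ≠ j) {k l : ℕ} (h : hookWord i j k <+: hookWord i j l) :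
    k = l := by
  have hkl : k ≤ l := by simpa using h.length_le
  refine hkl.eq_of_not_lt fun hlt => hij ?_
  simpa [getElem?_hookWord_of_lt hlt] using getElem?_of_hookWord_prefix h

theorem hookWord_prefix_of_prefix_append (hij : i ≠ j) {k : ℕ} {w : List ι} (hw : w ≠ [])
    (h : hookWord i j k <+: w ++ hookWord i j k) : hookWord i j k <+: w := by
  have hpos : 0 < w.length := List.length_pos_iff.2 hw
  rcases lt_or_ge k w.length with hlong | hshort
  · exact List.prefix_of_prefix_length_le h (List.prefix_append _ _) (by simpa)
  · have hletter := getElem?_of_hookWord_prefix h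
    rw [List.getElem?_append_right hshort, getElem?_hookWord_of_lt (by omega)] at hletter
    exact absurd (by simpa using hletter) hij

theorem IsRowIsometry.wordOp_hookWord (hV : IsRowIsometry V) (hij : i ≠ j) :
    IsRowIsometry fun k => wordOp V (hookWord i j k) := by
  intro k l x y
  split_ifs with hkl
  · rw [hkl, hV.inner_wordOp]
  · exact hV.inner_wordOp_eq_zero (fun h => hkl (eq_of_hookWord_prefix hij h))
      (fun h => hkl (eq_of_hookWord_prefix hij h).symm) x y

theorem IsRowIsometry.orbitSum_hookWord [CompleteSpace E] (hV : IsRowIsometry V) (i j : ι)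
    (x b : E) (k : ℕ) : orbitSum V x (wordOp V (hookWord i j k) b) = orbitSum V x b +
      ∑ a ∈ Finset.range (k + 1), ‖⟪x, wordOp V (hookWord i j a) b⟫‖ₑ ^ 2 := by
  induction k with
  | zero => simp [hookWord, hV.orbitSum_map_right, add_comm]
  | succ k ih =>
    rw [Finset.sum_range_succ, ← add_assoc, ← ih, hookWord_succ, wordOp_cons_apply,
      hV.orbitSum_map_right, add_comm]

end Hooks

section OrbitDefect

variable {E ι : Type*} [NormedAddCommGroup E] [InnerProductSpace ℂ E] {V : ι → E →L[ℂ] E}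

/-- The squared `ℓ²`-distance from the coefficients of `V_v z` along the orbit of `z` to the delta
function at `v`. The vector `z` is almost wandering when `orbitDefect V [] z` is small. -/
def orbitDefect (V : ι → E →L[ℂ] E) (v : List ι) (z : E) : ℝ≥0∞ :=
  sqSum fun w => ⟪wordOp V w z, wordOp V v z⟫ - if w = v then 1 else 0

theorem IsRowIsometry.orbitDefect_hookWord (hV : IsRowIsometry V) {i j : ι} (hij : i ≠ j) {b : E}
    (hb : ‖b‖ = 1) (k : ℕ) : orbitDefect V [] (wordOp V (hookWord i j k) b) =
      orbitSum V (wordOp V (hookWord i j k) b) b := by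
  set s := hookWord i j k
  have hinj : Function.Injective fun v : List ι => s ++ v := fun u v h => by simpa using h
  unfold orbitDefect orbitSum sqSum
  rw [← hinj.tsum_eq]
  · refine tsum_congr fun w => ?_
    simp [wordOp_append_apply, hV.inner_wordOp, s, hookWord_ne_nil]
  · intro w hw
    by_contra hprefix
    refine hw ?_
    rcases eq_or_ne w [] with rfl | hne
    · simp [hV.norm_wordOp, hb, inner_self_eq_norm_sq_to_K]
    · have hlong : ¬ w ++ s <+: s := fun h => hne (by simpa using h.length_le)
      have hshort : ¬ s <+: w ++ s := fun h =>
        hprefix (hookWord_prefix_of_prefix_append hij hne h)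
      simp [← wordOp_append_apply, hV.inner_wordOp_eq_zero hlong hshort, hne]

theorem IsRowIsometry.orbitDefect_cons (hV : IsRowIsometry V) (i : ι) (v : List ι) (z : E) :
    orbitDefect V (i :: v) z = ‖⟪z, wordOp V (i :: v) z⟫‖ₑ ^ 2 + orbitDefect V v z := by
  rw [orbitDefect, sqSum, tsum_list_eq, tsum_eq_single i fun j hj => by
    simp [wordOp_cons_apply, hV.inner_map_of_ne hj, hj]]
  simp [wordOp_cons_apply, hV.inner_map_map, orbitDefect, sqSum]

theorem enorm_inner_comm (x y : E) : ‖⟪x, y⟫‖ₑ = ‖⟪y, x⟫‖ₑ := by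
  rw [← ofReal_norm, ← ofReal_norm, norm_inner_symm]

theorem IsRowIsometry.orbitDefect_le (hV : IsRowIsometry V) (z : E) (v : List ι) :
    orbitDefect V v z ≤ (v.length + 1) * orbitDefect V [] z := by
  induction v with
  | nil => simp
  | cons i v ih =>
    have hcoeff : ‖⟪z, wordOp V (i :: v) z⟫‖ₑ ^ 2 ≤ orbitDefect V [] z := by
      rw [enorm_inner_comm]
      simpa [orbitDefect, sqSum] using ENNReal.le_tsum
        (f := fun w => ‖⟪wordOp V w z, wordOp V [] z⟫ - if w = [] then 1 else 0‖ₑ ^ 2) (i :: v)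
    calc orbitDefect V (i :: v) z
        ≤ orbitDefect V [] z + (v.length + 1) * orbitDefect V [] z := by
          rw [hV.orbitDefect_cons]
          exact add_le_add hcoeff ih
      _ = ((i :: v).length + 1) * orbitDefect V [] z := by push_cast [List.length_cons]; ring

theorem IsRowIsometry.orbitSum_wordOp_right_le [CompleteSpace E] (hV : IsRowIsometry V) (x z : E)
    (v : List ι) :
    orbitSum V x (wordOp V v z) ≤ orbitSum V x z + v.length * orbitSum V z x := by
  induction v with
  | nil => simp
  | cons i v ih =>
    have hcoeff : ‖⟪x, wordOp V (i :: v) z⟫‖ₑ ^ 2 ≤ orbitSum V z x := by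
      rw [enorm_inner_comm]
      exact ENNReal.le_tsum (f := fun w => ‖⟪wordOp V w z, x⟫‖ₑ ^ 2) (i :: v)
    calc orbitSum V x (wordOp V (i :: v) z)
        ≤ orbitSum V z x + (orbitSum V x z + v.length * orbitSum V z x) := by
          rw [wordOp_cons_apply, hV.orbitSum_map_right, ← wordOp_cons_apply]
          exact add_le_add hcoeff ih
      _ = orbitSum V x z + (i :: v).length * orbitSum V z x := by
          push_cast [List.length_cons]; ring

end OrbitDefect

section SmallVectors

variable {E ι : Type*} [NormedAddCommGroup E] [InnerProductSpace ℂ E] {V : ι → E →L[ℂ] E}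

theorem enorm_inner_sq_le (x y : E) : ‖⟪x, y⟫‖ₑ ^ 2 ≤ ‖x‖ₑ ^ 2 * ‖y‖ₑ ^ 2 := by
  rw [← mul_pow]
  gcongr
  simpa only [enorm_eq_nnnorm, ← ENNReal.coe_mul, ENNReal.coe_le_coe] using
    nnnorm_inner_le_nnnorm (𝕜 := ℂ) x y

omit [InnerProductSpace ℂ E] in
theorem exists_enorm_sub_sq_lt_of_dense {s : Set E} (hs : Dense s) (x : E) {η : ℝ≥0∞}
    (hη : 0 < η) : ∃ a ∈ s, ‖x - a‖ₑ ^ 2 < η := by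
  have hopen : IsOpen {a | ‖x - a‖ₑ ^ 2 < η} := by
    refine isOpen_lt ?_ continuous_const
    exact (ENNReal.continuous_pow 2).comp (continuous_const.sub continuous_id).enorm
  have hx : ‖x - x‖ₑ ^ 2 < η := by simpa
  exact hs.exists_mem_open hopen ⟨x, hx⟩

theorem exists_sum_orbitSum_le {A : Finset E} (hA : ∀ a ∈ A, IsAbsCont V a) :
    ∃ C : ℝ≥0, ∀ y, ∑ a ∈ A, orbitSum V a y ≤ C * ‖y‖ₑ ^ 2 := by
  choose! C hC using hA
  refine ⟨∑ a ∈ A, C a, fun y => ?_⟩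
  rw [ENNReal.ofNNReal_finsetSum, Finset.sum_mul]
  exact Finset.sum_le_sum fun a ha => hC a ha y

theorem exists_forall_orbitTail_le {A : Finset E} (hA : ∀ a ∈ A, IsAbsCont V a) (y : E)
    {ε : ℝ≥0∞} (hε : 0 < ε) : ∃ d, ∀ a ∈ A, orbitTail V d a y ≤ ε := by
  choose! d hd using fun a ha => exists_orbitTail_le ((hA a ha).orbitSum_ne_top y) hε
  exact ⟨A.sup d, fun a ha => (orbitTail_anti (Finset.le_sup ha) a y).trans (hd a ha)⟩

variable [CompleteSpace E]

theorem IsRowIsometry.tsum_enorm_star_sq_le (hV : IsRowIsometry V) (x : E) :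
    ∑' i, ‖star (V i) x‖ₑ ^ 2 ≤ ‖x‖ₑ ^ 2 := by
  rw [ENNReal.tsum_eq_iSup_sum]
  refine iSup_le fun s => ?_
  set p := ∑ i ∈ s, V i (star (V i) x) with hp
  have hcoord (i : ι) (hi : i ∈ s) : star (V i) p = star (V i) x := by
    rw [hp, map_sum, Finset.sum_eq_single_of_mem i hi fun j _ hj => hV.star_apply_of_ne hj.symm _,
      hV.star_apply_self]
  have hinner (y : E) : ⟪p, y⟫ = ∑ i ∈ s, ⟪star (V i) x, star (V i) y⟫ := by
    simp only [hp, sum_inner, inner_star_right]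
  have hnorm_sq : ⟪p, p⟫ = ((∑ i ∈ s, ‖star (V i) x‖ ^ 2 : ℝ) : ℂ) := by
    push_cast
    rw [hinner]
    exact Finset.sum_congr rfl fun i hi => by rw [hcoord i hi, inner_self_eq_norm_sq_to_K]; rfl
  have hprojection : ⟪p, x - p⟫ = 0 := by
    rw [hinner]
    exact Finset.sum_eq_zero fun i hi => by simp [hcoord i hi]
  have hsum_le : ∑ i ∈ s, ‖star (V i) x‖ ^ 2 ≤ ‖x‖ ^ 2 := by
    have hnorm : ∑ i ∈ s, ‖star (V i) x‖ ^ 2 = ‖p‖ ^ 2 := by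
      rw [inner_self_eq_norm_sq_to_K] at hnorm_sq
      exact (Complex.ofReal_injective ((Complex.ofReal_pow _ _).trans hnorm_sq)).symm
    have hpythagoras :=
      norm_add_sq_eq_norm_sq_add_norm_sq_of_inner_eq_zero (𝕜 := ℂ) p (x - p) hprojection
    rw [add_sub_cancel] at hpythagoras
    nlinarith [mul_self_nonneg ‖x - p‖]
  simp only [← ofReal_norm, ← ENNReal.ofReal_pow (norm_nonneg _)]
  rw [← ENNReal.ofReal_sum_of_nonneg fun i _ => by positivity]
  exact ENNReal.ofReal_le_ofReal hsum_le

variable [Fintype ι]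

theorem IsCuntzRow.mul_enorm_sq_le_sum_orbitTail (hV : IsCuntzRow V) {A : Finset E} {δ : ℝ≥0∞}
    (h : ∀ b, δ * ‖b‖ₑ ^ 2 ≤ ∑ a ∈ A, orbitSum V a b) (d : ℕ) (b : E) :
    δ * ‖b‖ₑ ^ 2 ≤ ∑ a ∈ A, orbitTail V d a b := by
  induction d generalizing b with
  | zero => simpa [orbitTail_zero] using h b
  | succ d ih =>
    simp only [orbitTail_succ, tsum_fintype]
    rw [Finset.sum_comm, ← hV.sum_enorm_star_sq b, Finset.mul_sum]
    exact Finset.sum_le_sum fun i _ => ih _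

theorem IsCuntzRow.exists_sum_orbitSum_lt (hV : IsCuntzRow V) [Nontrivial E] {A : Finset E}
    (hA : ∀ a ∈ A, IsAbsCont V a) {δ : ℝ≥0∞} (hδ : 0 < δ) :
    ∃ b : E, ∑ a ∈ A, orbitSum V a b < δ * ‖b‖ₑ ^ 2 := by
  by_contra! hbound
  obtain ⟨b, hb⟩ := exists_ne (0 : E)
  have hpos : δ * ‖b‖ₑ ^ 2 ≠ 0 := by simp [hb, hδ.ne']
  obtain ⟨η, hη, hlt⟩ := ENNReal.exists_nnreal_pos_mul_lt (a := (A.card : ℝ≥0∞)) (by simp) hpos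
  obtain ⟨d, hd⟩ := exists_forall_orbitTail_le hA b (ε := η) (by simpa using hη)
  refine absurd (hV.mul_enorm_sq_le_sum_orbitTail hbound d b) (not_le.2 ?_)
  refine (Finset.sum_le_sum hd).trans_lt ?_
  simpa [mul_comm] using hlt

theorem IsCuntzRow.exists_isAbsCont_sum_orbitSum_lt (hV : IsCuntzRow V) [Nontrivial E]
    (hdense : Dense (absContSubmodule V : Set E)) {A : Finset E}
    (hA : ∀ a ∈ A, IsAbsCont V a) {δ : ℝ≥0} (hδ : 0 < δ) :
    ∃ b : E, IsAbsCont V b ∧ ∑ a ∈ A, orbitSum V a b < δ * ‖b‖ₑ ^ 2 := by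
  obtain ⟨C, hC⟩ := exists_sum_orbitSum_le hA
  obtain ⟨b, hb⟩ := hV.exists_sum_orbitSum_lt hA (δ := (δ / 2 : ℝ≥0)) (by simpa using hδ.ne')
  have hcont : Continuous fun c : E => ‖c - b‖ₑ ^ 2 :=
    (ENNReal.continuous_pow 2).comp (continuous_id.sub continuous_const).enorm
  have hopen : IsOpen {c : E | 2 * ∑ a ∈ A, orbitSum V a b + 2 * (C * ‖c - b‖ₑ ^ 2) <
      δ * ‖c‖ₑ ^ 2} :=
    isOpen_lt (continuous_const.add ((ENNReal.continuous_const_mul (by simp)).comp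
        ((ENNReal.continuous_const_mul (by simp)).comp hcont)))
      ((ENNReal.continuous_const_mul (by simp)).comp
        ((ENNReal.continuous_pow 2).comp continuous_enorm))
  have hb_mem : 2 * ∑ a ∈ A, orbitSum V a b + 2 * (C * ‖b - b‖ₑ ^ 2) < δ * ‖b‖ₑ ^ 2 := by
    calc 2 * ∑ a ∈ A, orbitSum V a b + 2 * (C * ‖b - b‖ₑ ^ 2)
        = 2 * ∑ a ∈ A, orbitSum V a b := by simp
      _ < 2 * ((δ / 2 : ℝ≥0) * ‖b‖ₑ ^ 2) := ENNReal.mul_lt_mul_right (by simp) (by simp) hb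
      _ = δ * ‖b‖ₑ ^ 2 := by
        rw [← mul_assoc]
        congr 1
        exact_mod_cast mul_div_cancel₀ δ two_ne_zero
  obtain ⟨c, hc, hlt⟩ := hdense.exists_mem_open hopen ⟨b, hb_mem⟩
  refine ⟨c, hc, lt_of_le_of_lt ?_ hlt⟩
  calc ∑ a ∈ A, orbitSum V a c = ∑ a ∈ A, orbitSum V a (b + (c - b)) := by simp
    _ ≤ ∑ a ∈ A, (2 * orbitSum V a b + 2 * orbitSum V a (c - b)) :=
        Finset.sum_le_sum fun a _ => orbitSum_add_right a b (c - b)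
    _ = 2 * ∑ a ∈ A, orbitSum V a b + 2 * ∑ a ∈ A, orbitSum V a (c - b) := by
        rw [Finset.sum_add_distrib, Finset.mul_sum, Finset.mul_sum]
    _ ≤ 2 * ∑ a ∈ A, orbitSum V a b + 2 * (C * ‖c - b‖ₑ ^ 2) := by
        gcongr
        exact hC (c - b)

theorem IsCuntzRow.exists_isAbsCont_orbitSum_le (hV : IsCuntzRow V) [Nontrivial E]
    (hdense : Dense (absContSubmodule V : Set E)) {A : Finset E}
    (hA : ∀ a ∈ A, IsAbsCont V a) {δ : ℝ≥0} (hδ : 0 < δ) :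
    ∃ b : E, IsAbsCont V b ∧ ‖b‖ = 1 ∧ ∀ a ∈ A, orbitSum V a b ≤ δ := by
  obtain ⟨c, hc, hsum⟩ := hV.exists_isAbsCont_sum_orbitSum_lt hdense hA hδ
  have hne : c ≠ 0 := by
    rintro rfl
    simp at hsum
  have hnorm : ‖(‖c‖⁻¹ : ℂ) • c‖ = 1 := norm_smul_inv_norm hne
  have hcancel : ‖(‖c‖⁻¹ : ℂ)‖ₑ ^ 2 * ‖c‖ₑ ^ 2 = 1 := by
    rw [← mul_pow, ← enorm_smul, ← ofReal_norm, hnorm]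
    simp
  refine ⟨(‖c‖⁻¹ : ℂ) • c, hc.smul _, hnorm, fun a ha => ?_⟩
  rw [orbitSum_smul_right]
  calc ‖(‖c‖⁻¹ : ℂ)‖ₑ ^ 2 * orbitSum V a c ≤ ‖(‖c‖⁻¹ : ℂ)‖ₑ ^ 2 * (δ * ‖c‖ₑ ^ 2) := by
        gcongr
        exact (Finset.single_le_sum (f := fun a => orbitSum V a c) (fun _ _ => zero_le) ha).trans
          hsum.le
    _ = δ * (‖(‖c‖⁻¹ : ℂ)‖ₑ ^ 2 * ‖c‖ₑ ^ 2) := by ring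
    _ = δ := by rw [hcancel, mul_one]

theorem IsCuntzRow.exists_isAbsCont_inner_le (hV : IsCuntzRow V) [Nontrivial E]
    (hdense : Dense (absContSubmodule V : Set E)) {x : E} (hx : IsAbsCont V x) (A : Finset E)
    {δ : ℝ≥0} (hδ : 0 < δ) :
    ∃ b, IsAbsCont V b ∧ ‖b‖ = 1 ∧ orbitSum V x b ≤ δ ∧ ∀ c ∈ A, ‖⟪c, b⟫‖ₑ ^ 2 ≤ δ := by
  have hδ' : 0 < δ / 4 := by positivity
  choose approx happrox_mem happrox using fun c : E =>
    exists_enorm_sub_sq_lt_of_dense hdense c (η := (δ / 4 : ℝ≥0)) (by simpa using hδ'.ne')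
  obtain ⟨b, hb, hb_norm, hsmall⟩ := hV.exists_isAbsCont_orbitSum_le hdense
    (A := insert x (A.image approx))
    (Finset.forall_mem_insert _ _ _ |>.2 ⟨hx, Finset.forall_mem_image.2 fun c _ =>
      happrox_mem c⟩) hδ'
  have hb_enorm : ‖b‖ₑ = 1 := by rw [← ofReal_norm, hb_norm, ENNReal.ofReal_one]
  refine ⟨b, hb, hb_norm, (hsmall x (Finset.mem_insert_self _ _)).trans ?_, fun c hc => ?_⟩
  · exact_mod_cast div_le_self δ.2 (by norm_num)
  calc ‖⟪c, b⟫‖ₑ ^ 2 = ‖⟪c - approx c, b⟫ + ⟪approx c, b⟫‖ₑ ^ 2 := by simp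
    _ ≤ 2 * ‖⟪c - approx c, b⟫‖ₑ ^ 2 + 2 * ‖⟪approx c, b⟫‖ₑ ^ 2 := enorm_add_sq_le _ _
    _ ≤ 2 * (δ / 4 : ℝ≥0) + 2 * (δ / 4 : ℝ≥0) := by
        gcongr
        · simpa [hb_enorm] using (enorm_inner_sq_le _ b).trans
            (mul_le_mul_left (happrox c).le (‖b‖ₑ ^ 2))
        · exact (enorm_inner_sq_le_orbitSum _ _).trans
            (hsmall _ (Finset.mem_insert_of_mem (Finset.mem_image_of_mem _ hc)))
    _ = δ := by
        rw [← add_mul, ← two_mul]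
        exact_mod_cast (by ring : (2 + 2) * (δ / 4) = δ)

theorem IsCuntzRow.exists_isAbsCont_orbitSum_add_tsum_le (hV : IsCuntzRow V) [Nontrivial E]
    (hdense : Dense (absContSubmodule V : Set E)) {W : ℕ → E →L[ℂ] E} (hW : IsRowIsometry W)
    {x : E} (hx : IsAbsCont V x) {δ : ℝ≥0} (hδ : 0 < δ) : ∃ b, IsAbsCont V b ∧ ‖b‖ = 1 ∧
      orbitSum V x b + ∑' k, ‖⟪x, W k b⟫‖ₑ ^ 2 ≤ δ := by
  set c : ℕ → E := fun k => star (W k) x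
  have hhalf : (0 : ℝ≥0∞) < (δ / 2 : ℝ≥0) := ENNReal.coe_pos.2 (by positivity)
  have hsummable : ∑' k, ‖c k‖ₑ ^ 2 ≠ ⊤ :=
    ne_top_of_le_ne_top (by finiteness) (hW.tsum_enorm_star_sq_le x)
  obtain ⟨J, hJ⟩ :=
    ((ENNReal.tendsto_sum_nat_add _ hsummable).eventually (gt_mem_nhds hhalf)).exists
  obtain ⟨b, hb, hb_norm, hbx, hbc⟩ := hV.exists_isAbsCont_inner_le hdense hx
    ((Finset.range J).image c) (δ := δ / 2 / (J + 1)) (by positivity)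
  have hb_enorm : ‖b‖ₑ = 1 := by rw [← ofReal_norm, hb_norm, ENNReal.ofReal_one]
  refine ⟨b, hb, hb_norm, ?_⟩
  have htail : ∑' k, ‖⟪c (k + J), b⟫‖ₑ ^ 2 ≤ (δ / 2 : ℝ≥0) := by
    refine (ENNReal.tsum_le_tsum fun k => ?_).trans hJ.le
    simpa [hb_enorm] using enorm_inner_sq_le (c (k + J)) b
  have hhead : ∑ k ∈ Finset.range J, ‖⟪c k, b⟫‖ₑ ^ 2 ≤ J * (δ / 2 / (J + 1) : ℝ≥0) := by
    simpa using Finset.sum_le_card_nsmul (Finset.range J) _ _ fun k hk =>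
      hbc _ (Finset.mem_image_of_mem c hk)
  simp only [← inner_star_left]
  calc orbitSum V x b + ∑' k, ‖⟪c k, b⟫‖ₑ ^ 2
      = orbitSum V x b + (∑ k ∈ Finset.range J, ‖⟪c k, b⟫‖ₑ ^ 2 +
          ∑' k, ‖⟪c (k + J), b⟫‖ₑ ^ 2) := by
        rw [Summable.sum_add_tsum_nat_add' (f := fun k => ‖⟪c k, b⟫‖ₑ ^ 2) ENNReal.summable]
    _ ≤ (δ / 2 / (J + 1) : ℝ≥0) + (J * (δ / 2 / (J + 1) : ℝ≥0) + (δ / 2 : ℝ≥0)) := by gcongr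
    _ = δ := by
        have : δ / 2 / (J + 1) + (J * (δ / 2 / (J + 1)) + δ / 2) = δ := by field_simp; ring
        exact_mod_cast this

theorem IsCuntzRow.exists_isAbsCont_orbitSum_hookWord_le (hV : IsCuntzRow V) [Nontrivial E]
    (hdense : Dense (absContSubmodule V : Set E)) {x : E} (hx : IsAbsCont V x) {i j : ι}
    (hij : i ≠ j) {δ : ℝ≥0} (hδ : 0 < δ) : ∃ b, IsAbsCont V b ∧ ‖b‖ = 1 ∧
      ∀ k, orbitSum V x (wordOp V (hookWord i j k) b) ≤ δ := by
  obtain ⟨b, hb, hb_norm, hle⟩ := hV.exists_isAbsCont_orbitSum_add_tsum_le hdense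
    (hV.isRowIsometry.wordOp_hookWord hij) hx hδ
  refine ⟨b, hb, hb_norm, fun k => le_trans ?_ hle⟩
  rw [hV.isRowIsometry.orbitSum_hookWord]
  gcongr
  exact ENNReal.sum_le_tsum _

theorem IsCuntzRow.exists_almost_wandering (hV : IsCuntzRow V) [Nontrivial E] [Nontrivial ι]
    (hdense : Dense (absContSubmodule V : Set E)) {x : E} (hx : IsAbsCont V x) (y : E) {δ : ℝ≥0}
    (hδ : 0 < δ) : ∃ z, IsAbsCont V z ∧ ‖z‖ = 1 ∧ orbitDefect V [] z ≤ δ ∧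
      orbitSum V z y ≤ δ ∧ orbitSum V z x ≤ δ ∧ orbitSum V x z ≤ δ := by
  obtain ⟨i, j, hij⟩ := exists_pair_ne ι
  obtain ⟨b, hb, hb_norm, hbx⟩ := hV.exists_isAbsCont_orbitSum_hookWord_le hdense hx hij hδ
  choose d hd using fun u => exists_orbitTail_le (hb.orbitSum_ne_top u)
    (ε := δ) (by simpa using hδ)
  set k := max (d b) (max (d y) (d x))
  have htail (u : E) (hu : d u ≤ k) : orbitSum V (wordOp V (hookWord i j k) b) u ≤ δ := by
    refine (orbitSum_wordOp_left_le_orbitTail _ _ _).trans ((orbitTail_anti ?_ _ _).trans (hd u))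
    rw [length_hookWord]
    omega
  refine ⟨wordOp V (hookWord i j k) b, hb.wordOp_apply _,
    by rw [hV.isRowIsometry.norm_wordOp, hb_norm],
    ?_, htail y (by grind), htail x (by grind), hbx k⟩
  rw [hV.isRowIsometry.orbitDefect_hookWord hij hb_norm]
  exact htail b (by grind)

end SmallVectors

section Correction

variable {E ι : Type*} [NormedAddCommGroup E] [InnerProductSpace ℂ E]

theorem exists_finset_sqSum_le {α : Type*} [DecidableEq α] {f : α → ℂ} (hf : sqSum f ≠ ⊤)
    {η : ℝ≥0∞} (hη : 0 < η) : ∃ F : Finset α, sqSum (fun a => if a ∈ F then 0 else f a) ≤ η := by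
  obtain ⟨F, hF⟩ :=
    ((ENNReal.tendsto_tsum_compl_atTop_zero hf).eventually (gt_mem_nhds hη)).exists
  have hsubtype : ∑' b : {a // a ∉ F}, ‖f b‖ₑ ^ 2 = _ :=
    tsum_subtype {a | a ∉ F} fun a => ‖f a‖ₑ ^ 2
  refine ⟨F, le_trans (le_of_eq (tsum_congr fun a => ?_)) (hsubtype ▸ hF.le)⟩
  by_cases ha : a ∈ F <;> simp [ha]

/-- The deviation of the coefficients of `y` along the orbit of `x` from the delta function at
the empty word. It vanishes for a suitable `y` exactly when `x` has a multiple of a wandering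
vector as a component. -/
def orbitResidual (V : ι → E →L[ℂ] E) (x y : E) (w : List ι) : ℂ :=
  (if w = [] then 1 else 0) - ⟪wordOp V w x, y⟫

/-- The combination `∑ v ∈ F, r v • V_v z` of vectors in the orbit of `z`. -/
def orbitCombination (V : ι → E →L[ℂ] E) (F : Finset (List ι)) (r : List ι → ℂ) (z : E) : E :=
  ∑ v ∈ F, r v • wordOp V v z

/-- The amount by which the coefficients of `orbitCombination V F r z` along the orbit of `z` differ
from `r`, which is zero if `z` is wandering. -/
def combinationError (V : ι → E →L[ℂ] E) (F : Finset (List ι)) (r : List ι → ℂ) (z : E)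
    (w : List ι) : ℂ :=
  ∑ v ∈ F, r v * (⟪wordOp V w z, wordOp V v z⟫ - if w = v then 1 else 0)

variable {V : ι → E →L[ℂ] E}

theorem inner_orbitCombination (F : Finset (List ι)) (r : List ι → ℂ) (x z : E) :
    ⟪x, orbitCombination V F r z⟫ = ∑ v ∈ F, r v * ⟪x, wordOp V v z⟫ := by
  simp [orbitCombination]

theorem inner_wordOp_orbitCombination_self (F : Finset (List ι)) (r : List ι → ℂ) (z : E)
    (w : List ι) : ⟪wordOp V w z, orbitCombination V F r z⟫ =
      (if w ∈ F then r w else 0) + combinationError V F r z w := by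
  simp [inner_orbitCombination, combinationError, mul_sub, Finset.sum_sub_distrib]

theorem enorm_orbitCombination_sq_le (F : Finset (List ι)) (r : List ι → ℂ) (z : E) :
    ‖orbitCombination V F r z‖ₑ ^ 2 ≤ 3 * sqSum r + 2 * sqSum (combinationError V F r z) := by
  set u := orbitCombination V F r z with hu
  have hexpand : ⟪u, u⟫ = ∑ v ∈ F, r v * ⟪u, wordOp V v z⟫ := inner_orbitCombination F r u z
  have hself : ‖u‖ₑ ^ 2 = ‖⟪u, u⟫‖ₑ := by
    rw [inner_self_eq_norm_sq_to_K, enorm_pow, ← ofReal_norm u, ← ofReal_norm]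
    simp
  have hmul (a b : ℝ≥0∞) : a * b ≤ a ^ 2 + b ^ 2 := by
    rcases le_total a b with h | h
    · exact (mul_le_mul_left h b).trans (by rw [← sq]; exact le_add_self)
    · exact (mul_le_mul_right h a).trans (by rw [← sq]; exact le_self_add)
  have hterm (v : List ι) (hv : v ∈ F) : ‖r v * ⟪u, wordOp V v z⟫‖ₑ ≤
      3 * ‖r v‖ₑ ^ 2 + 2 * ‖combinationError V F r z v‖ₑ ^ 2 := by
    rw [enorm_mul, enorm_inner_comm, hu, inner_wordOp_orbitCombination_self, if_pos hv]
    calc ‖r v‖ₑ * ‖r v + combinationError V F r z v‖ₑ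
        ≤ ‖r v‖ₑ ^ 2 + (2 * ‖r v‖ₑ ^ 2 + 2 * ‖combinationError V F r z v‖ₑ ^ 2) :=
          (hmul _ _).trans (by gcongr; exact enorm_add_sq_le _ _)
      _ = 3 * ‖r v‖ₑ ^ 2 + 2 * ‖combinationError V F r z v‖ₑ ^ 2 := by ring
  rw [hself, hexpand]
  calc ‖∑ v ∈ F, r v * ⟪u, wordOp V v z⟫‖ₑ
      ≤ ∑ v ∈ F, (3 * ‖r v‖ₑ ^ 2 + 2 * ‖combinationError V F r z v‖ₑ ^ 2) :=
        (enorm_sum_le _ _).trans (Finset.sum_le_sum hterm)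
    _ = 3 * ∑ v ∈ F, ‖r v‖ₑ ^ 2 + 2 * ∑ v ∈ F, ‖combinationError V F r z v‖ₑ ^ 2 := by
        rw [Finset.sum_add_distrib, Finset.mul_sum, Finset.mul_sum]
    _ ≤ 3 * sqSum r + 2 * sqSum (combinationError V F r z) := by
        gcongr <;> exact ENNReal.sum_le_tsum _

theorem norm_orbitCombination_le {F : Finset (List ι)} {r : List ι → ℂ} {z : E} {ε : ℝ≥0}
    (hr : sqSum r ≤ (ε : ℝ≥0∞) ^ 4) (herr : sqSum (combinationError V F r z) ≤ (ε : ℝ≥0∞) ^ 4) :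
    ‖orbitCombination V F r z‖ ≤ 3 * (ε : ℝ) ^ 2 := by
  have henorm : ‖orbitCombination V F r z‖ₑ ^ 2 ≤ 5 * (ε : ℝ≥0∞) ^ 4 := by
    calc ‖orbitCombination V F r z‖ₑ ^ 2 ≤ 3 * (ε : ℝ≥0∞) ^ 4 + 2 * (ε : ℝ≥0∞) ^ 4 :=
          (enorm_orbitCombination_sq_le F r z).trans (by gcongr)
      _ = 5 * (ε : ℝ≥0∞) ^ 4 := by ring
  have hnorm : ‖orbitCombination V F r z‖ ^ 2 ≤ 5 * (ε : ℝ) ^ 4 := by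
    rw [enorm_eq_nnnorm] at henorm
    exact_mod_cast henorm
  refine le_of_sq_le_sq ?_ (by positivity)
  nlinarith [pow_nonneg ε.coe_nonneg 4]

theorem sqSum_weighted_sum_le {α β : Type*} (F : Finset α) (r : α → ℂ) {f : α → β → ℂ}
    {c : α → ℝ≥0∞} {δ : ℝ≥0∞} (hf : ∀ v, sqSum (f v) ≤ c v * δ) :
    sqSum (fun w => ∑ v ∈ F, r v * f v w) ≤ F.card * ∑ v ∈ F, ‖r v‖ₑ ^ 2 * c v * δ := by
  refine (sqSum_sum_le F fun v w => r v * f v w).trans ?_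
  gcongr with v _
  rw [sqSum_const_mul, mul_assoc]
  gcongr
  exact hf v

theorem orbitResidual_update {x y z : E} (F : Finset (List ι)) {ε : ℝ≥0} (hε : 0 < ε)
    (w : List ι) :
    orbitResidual V (x + (ε : ℂ) • z)
        (y + (ε : ℂ)⁻¹ • orbitCombination V F (orbitResidual V x y) z) w =
      ((if w ∈ F then 0 else orbitResidual V x y w) + -(ε : ℂ) * ⟪wordOp V w z, y⟫) +
      (-(ε : ℂ)⁻¹ * (∑ v ∈ F, orbitResidual V x y v * ⟪wordOp V w x, wordOp V v z⟫) +
        -1 * combinationError V F (orbitResidual V x y) z w) := by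
  have hε_ne : (ε : ℂ) ≠ 0 := by exact_mod_cast hε.ne'
  have hresidual : ⟪wordOp V w x, y⟫ = (if w = [] then 1 else 0) - orbitResidual V x y w := by
    simp [orbitResidual]
  have hconj : starRingEnd ℂ (ε : ℂ) = ε := Complex.conj_ofReal _
  rw [orbitResidual, map_add, map_smul, inner_add_left, inner_smul_left, inner_add_right,
    inner_add_right, inner_smul_right, inner_smul_right, inner_orbitCombination,
    inner_wordOp_orbitCombination_self, hresidual, hconj]
  split_ifs <;> field_simp <;> ring

theorem sqSum_orbitResidual_update_le {x y z : E} (F : Finset (List ι)) {ε : ℝ≥0} (hε : 0 < ε) :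
    sqSum (orbitResidual V (x + (ε : ℂ) • z)
        (y + (ε : ℂ)⁻¹ • orbitCombination V F (orbitResidual V x y) z)) ≤
      4 * sqSum (fun w => if w ∈ F then 0 else orbitResidual V x y w) +
        4 * (‖(ε : ℂ)‖ₑ ^ 2 * orbitSum V z y + ‖(ε : ℂ)⁻¹‖ₑ ^ 2 *
            sqSum (fun w => ∑ v ∈ F, orbitResidual V x y v * ⟪wordOp V w x, wordOp V v z⟫) +
          sqSum (combinationError V F (orbitResidual V x y) z)) := by
  rw [funext (orbitResidual_update F hε)]
  refine (sqSum_add_le _ _).trans ((add_le_add (mul_le_mul_right (sqSum_add_le _ _) _)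
    (mul_le_mul_right (sqSum_add_le _ _) _)).trans_eq ?_)
  simp only [sqSum_const_mul, enorm_neg, enorm_one]
  rw [orbitSum]
  ring

theorem sqSum_orbitResidual_zero : sqSum (orbitResidual V 0 0) = 1 := by
  rw [sqSum, tsum_eq_single [] fun w hw => by simp [orbitResidual, hw]]
  simp [orbitResidual]

theorem orbitResidual_eq_zero_of_tendsto {u : ℕ → E × E} {x y : E}
    (hx : Filter.Tendsto (fun n => (u n).1) Filter.atTop (𝓝 x))
    (hy : Filter.Tendsto (fun n => (u n).2) Filter.atTop (𝓝 y))
    (hu : Filter.Tendsto (fun n => sqSum (orbitResidual V (u n).1 (u n).2)) Filter.atTop (𝓝 0))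
    (w : List ι) : orbitResidual V x y w = 0 := by
  have hlim : Filter.Tendsto (fun n => ‖orbitResidual V (u n).1 (u n).2 w‖ₑ ^ 2) Filter.atTop
      (𝓝 (‖orbitResidual V x y w‖ₑ ^ 2)) := by
    refine ((ENNReal.continuous_pow 2).tendsto _).comp ((continuous_enorm.tendsto _).comp ?_)
    exact tendsto_const_nhds.sub (((wordOp V w).continuous.tendsto _).comp hx |>.inner hy)
  have hle := le_of_tendsto_of_tendsto' hlim hu fun n => ENNReal.le_tsum
    (f := fun w => ‖orbitResidual V (u n).1 (u n).2 w‖ₑ ^ 2) w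
  simpa using hle

end Correction

section ExistsWandering

variable {E ι : Type*} [NormedAddCommGroup E] [InnerProductSpace ℂ E] [CompleteSpace E] [Fintype ι]
  {V : ι → E →L[ℂ] E}

theorem IsCuntzRow.exists_isAbsCont_combinationError_le (hV : IsCuntzRow V) [Nontrivial E]
    [Nontrivial ι] (hdense : Dense (absContSubmodule V : Set E)) {x : E} (hx : IsAbsCont V x)
    (y : E) (F : Finset (List ι)) (r : List ι → ℂ) {τ : ℝ≥0∞} (hτ : 0 < τ) :
    ∃ z, IsAbsCont V z ∧ ‖z‖ = 1 ∧ orbitSum V z y ≤ τ ∧ sqSum (combinationError V F r z) ≤ τ ∧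
      sqSum (fun w => ∑ v ∈ F, r v * ⟪wordOp V w x, wordOp V v z⟫) ≤ τ := by
  set K : ℝ≥0∞ := F.card * ∑ v ∈ F, ‖r v‖ₑ ^ 2 * (v.length + 1) with hK
  have hK_ne_top : K ≠ ⊤ :=
    ENNReal.mul_ne_top (by simp) (ENNReal.sum_ne_top.2 fun v _ => by finiteness)
  obtain ⟨δ, hδ, hδ_lt⟩ :=
    ENNReal.exists_nnreal_pos_mul_lt (a := 1 + K) (by finiteness) hτ.ne'
  rw [mul_comm, add_mul, one_mul] at hδ_lt
  have hδτ : δ ≤ τ := le_self_add.trans hδ_lt.le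
  have hKδ : K * δ ≤ τ := le_add_self.trans hδ_lt.le
  obtain ⟨z, hz, hz_norm, hdefect, hzy, hzx, hxz⟩ := hV.exists_almost_wandering hdense hx y hδ
  have hweighted {f : List ι → List ι → ℂ} (hf : ∀ v, sqSum (f v) ≤ (v.length + 1) * δ) :
      sqSum (fun w => ∑ v ∈ F, r v * f v w) ≤ τ := by
    refine le_trans ?_ hKδ
    simpa only [hK, mul_assoc, Finset.sum_mul] using sqSum_weighted_sum_le F r hf
  refine ⟨z, hz, hz_norm, hzy.trans hδτ, hweighted fun v => ?_, hweighted fun v => ?_⟩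
  · exact (hV.isRowIsometry.orbitDefect_le z v).trans (by gcongr)
  · exact (hV.isRowIsometry.orbitSum_wordOp_right_le x z v).trans <|
      (add_le_add hxz (mul_le_mul_right hzx _)).trans_eq (by ring)

/-- Adding `ε z` to `x` and `ε⁻¹ ∑ r_v V_v z` to `y` cancels the residual `r` up to errors that
vanish as `z` approaches a wandering vector orthogonal to the orbits of `x` and `y`. -/
theorem IsCuntzRow.exists_sqSum_orbitResidual_le (hV : IsCuntzRow V) [Nontrivial E] [Nontrivial ι]
    (hdense : Dense (absContSubmodule V : Set E)) {x y : E} (hx : IsAbsCont V x) {ε : ℝ≥0}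
    (hε : 0 < ε) (hr : sqSum (orbitResidual V x y) ≤ (ε : ℝ≥0∞) ^ 4) {η : ℝ≥0∞} (hη : 0 < η) :
    ∃ x' y' : E, IsAbsCont V x' ∧ sqSum (orbitResidual V x' y') ≤ η ∧ ‖x' - x‖ ≤ ε ∧
      ‖y' - y‖ ≤ 3 * ε := by
  set r := orbitResidual V x y
  have hη_div : 0 < η / 8 := ENNReal.div_pos hη.ne' (by simp)
  obtain ⟨F, hF⟩ := exists_finset_sqSum_le (ne_top_of_le_ne_top (by finiteness) hr) hη_div
  set K : ℝ≥0∞ := ‖(ε : ℂ)‖ₑ ^ 2 + ‖(ε : ℂ)⁻¹‖ₑ ^ 2 + 1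
  obtain ⟨τ, hτ, hτ_lt⟩ := ENNReal.exists_nnreal_pos_mul_lt
    (a := K) (b := min (η / 8) ((ε : ℝ≥0∞) ^ 4)) (by finiteness) (by simp [hη_div.ne', hε.ne'])
  obtain ⟨z, hz, hz_norm, hzy, herr, hcross⟩ :=
    hV.exists_isAbsCont_combinationError_le hdense hx y F r (ENNReal.coe_pos.2 hτ)
  refine ⟨x + (ε : ℂ) • z, y + (ε : ℂ)⁻¹ • orbitCombination V F r z, hx.add (hz.smul _), ?_, ?_, ?_⟩
  · refine (sqSum_orbitResidual_update_le F hε).trans ?_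
    calc _ ≤ 4 * (η / 8) + 4 * (‖(ε : ℂ)‖ₑ ^ 2 * τ + ‖(ε : ℂ)⁻¹‖ₑ ^ 2 * τ + τ) := by gcongr
      _ = 4 * (η / 8) + 4 * (τ * K) := by ring
      _ ≤ 4 * (η / 8) + 4 * (η / 8) := by gcongr; exact hτ_lt.le.trans (min_le_left _ _)
      _ = 8 * (η / 8) := by ring
      _ = η := ENNReal.mul_div_cancel (by simp) (by simp)
  · simp [norm_smul, hz_norm]
  · have hτε : τ ≤ (ε : ℝ≥0∞) ^ 4 :=
      (le_mul_of_one_le_right' le_add_self).trans (hτ_lt.le.trans (min_le_right _ _))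
    have hnorm : ‖orbitCombination V F r z‖ ≤ 3 * (ε : ℝ) ^ 2 :=
      norm_orbitCombination_le hr (herr.trans hτε)
    calc ‖y + (ε : ℂ)⁻¹ • orbitCombination V F r z - y‖
        = (ε : ℝ)⁻¹ * ‖orbitCombination V F r z‖ := by simp [norm_smul]
      _ ≤ (ε : ℝ)⁻¹ * (3 * (ε : ℝ) ^ 2) := by gcongr
      _ = 3 * ε := by field_simp

theorem IsCuntzRow.exists_orbitResidual_eq_zero (hV : IsCuntzRow V) [Nontrivial E] [Nontrivial ι]
    (hdense : Dense (absContSubmodule V : Set E)) : ∃ x y : E, ∀ w, orbitResidual V x y w = 0 := by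
  let IsApprox (n : ℕ) (p : E × E) : Prop :=
    IsAbsCont V p.1 ∧ sqSum (orbitResidual V p.1 p.2) ≤ (((1 / 2 : ℝ≥0) ^ n : ℝ≥0) : ℝ≥0∞) ^ 4
  have hstep (n : ℕ) (p : E × E) (hp : IsApprox n p) : ∃ q, IsApprox (n + 1) q ∧
      ‖q.1 - p.1‖ ≤ (1 / 2 : ℝ) ^ n ∧ ‖q.2 - p.2‖ ≤ 3 * (1 / 2 : ℝ) ^ n := by
    have hpos (k : ℕ) : (0 : ℝ≥0) < (1 / 2) ^ k := by positivity
    obtain ⟨x, y, hx, hres, hx_dist, hy_dist⟩ := hV.exists_sqSum_orbitResidual_le hdense hp.1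
      (hpos n) hp.2 (ENNReal.pow_pos (ENNReal.coe_pos.2 (hpos (n + 1))) 4)
    exact ⟨(x, y), ⟨hx, hres⟩, by simpa using hx_dist, by simpa using hy_dist⟩
  choose! next hnext hdist_fst hdist_snd using hstep
  let u (n : ℕ) : E × E := Nat.rec (0, 0) next n
  have hu (n : ℕ) : IsApprox n (u n) := by
    induction n with
    | zero => exact ⟨IsAbsCont.zero, by simp [u, sqSum_orbitResidual_zero]⟩
    | succ n ih => exact hnext n _ ih
  obtain ⟨x, hx⟩ := cauchySeq_tendsto_of_complete (cauchySeq_of_le_geometric (1 / 2 : ℝ) 1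
    (by norm_num) (f := fun n => (u n).1) fun n => by
      rw [dist_comm, dist_eq_norm, one_mul]
      exact hdist_fst n _ (hu n))
  obtain ⟨y, hy⟩ := cauchySeq_tendsto_of_complete (cauchySeq_of_le_geometric (1 / 2 : ℝ) 3
    (by norm_num) (f := fun n => (u n).2) fun n => by
      rw [dist_comm, dist_eq_norm]
      exact hdist_snd n _ (hu n))
  refine ⟨x, y, orbitResidual_eq_zero_of_tendsto hx hy ?_⟩
  have hgeom : Filter.Tendsto (fun n : ℕ => (((1 / 2 : ℝ≥0) ^ n : ℝ≥0) : ℝ≥0∞) ^ 4) Filter.atTop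
      (𝓝 0) := by
    have hpow : Filter.Tendsto (fun n : ℕ => (1 / 2 : ℝ≥0) ^ n) Filter.atTop (𝓝 0) :=
      NNReal.tendsto_pow_atTop_nhds_zero_of_lt_one (NNReal.half_lt_self one_ne_zero)
    simpa [Function.comp_def] using
      ((ENNReal.continuous_pow 4).tendsto _).comp (ENNReal.tendsto_coe.2 hpow)
  exact tendsto_of_tendsto_of_tendsto_of_le_of_le tendsto_const_nhds hgeom (fun _ => zero_le)
    fun n => (hu n).2

theorem IsCuntzRow.exists_isWandering_of_dense (hV : IsCuntzRow V) [Nontrivial E] [Nontrivial ι]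
    (hdense : Dense (absContSubmodule V : Set E)) : ∃ ζ, IsWandering V ζ := by
  obtain ⟨x, y, hres⟩ := hV.exists_orbitResidual_eq_zero hdense
  refine hV.isRowIsometry.exists_isWandering_of_inner_eq_zero (x := x) (y := y)
    (fun w hw => by simpa [orbitResidual, hw] using hres w) ?_
  have hone : ⟪x, y⟫ = 1 := (sub_eq_zero.1 (by simpa [orbitResidual] using hres [])).symm
  exact hone.trans_ne one_ne_zero

end ExistsWandering

section WanderingSpan

variable {E ι : Type*} [NormedAddCommGroup E] [InnerProductSpace ℂ E] {V : ι → E →L[ℂ] E}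

theorem norm_inner_sum_sq_le {α : Type*} (F : Finset α) (c : α → ℂ) (e : α → E) (z : E) :
    ‖⟪∑ w ∈ F, c w • e w, z⟫‖ ^ 2 ≤ (∑ w ∈ F, ‖c w‖ ^ 2) * ∑ w ∈ F, ‖⟪e w, z⟫‖ ^ 2 := by
  refine le_trans ?_ (Finset.sum_mul_sq_le_sq_mul_sq F (fun w => ‖c w‖) fun w => ‖⟪e w, z⟫‖)
  gcongr
  rw [sum_inner]
  refine (norm_sum_le _ _).trans_eq (Finset.sum_congr rfl fun w _ => ?_)
  simp [inner_smul_left]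

theorem sum_norm_sq_le_of_sum_enorm_sq_le {α : Type*} (F : Finset α) (f : α → ℂ) {t : ℝ≥0}
    (h : ∑ w ∈ F, ‖f w‖ₑ ^ 2 ≤ t) : ∑ w ∈ F, ‖f w‖ ^ 2 ≤ t := by
  have hnnnorm : ∑ w ∈ F, ‖f w‖₊ ^ 2 ≤ t := by
    simp only [enorm_eq_nnnorm] at h
    exact_mod_cast h
  simpa using NNReal.coe_le_coe.2 hnnnorm

theorem IsWandering.norm_sum_wordOp_sq {ζ : E} (hζ : IsWandering V ζ) (F : Finset (List ι))
    (c : List ι → ℂ) : ‖∑ w ∈ F, c w • wordOp V w ζ‖ ^ 2 = ∑ w ∈ F, ‖c w‖ ^ 2 := by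
  have horth : Orthonormal ℂ fun w => wordOp V w ζ := orthonormal_iff_ite.2 hζ.2
  simpa using horth.orthogonalFamily.norm_sum c F

-- The norm of the synthesis map `c ↦ ∑ c_w V_w a` is that of its adjoint `y ↦ (⟪V_w a, y⟫)_w`.
theorem norm_sum_wordOp_sq_le {a : E} {C : ℝ≥0} (ha : ∀ y, orbitSum V a y ≤ C * ‖y‖ₑ ^ 2)
    (F : Finset (List ι)) (c : List ι → ℂ) :
    ‖∑ w ∈ F, c w • wordOp V w a‖ ^ 2 ≤ C * ∑ w ∈ F, ‖c w‖ ^ 2 := by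
  set q := ∑ w ∈ F, c w • wordOp V w a
  have hanalysis : ∑ w ∈ F, ‖⟪wordOp V w a, q⟫‖ ^ 2 ≤ C * ‖q‖ ^ 2 := by
    have hsum : ∑ w ∈ F, ‖⟪wordOp V w a, q⟫‖ₑ ^ 2 ≤ (C * ‖q‖₊ ^ 2 : ℝ≥0) := by
      refine (ENNReal.sum_le_tsum F).trans ((ha q).trans_eq ?_)
      rw [enorm_eq_nnnorm]
      push_cast
      rfl
    simpa using sum_norm_sq_le_of_sum_enorm_sq_le F _ hsum
  have hquartic : ‖q‖ ^ 2 * ‖q‖ ^ 2 ≤ (∑ w ∈ F, ‖c w‖ ^ 2) * (C * ‖q‖ ^ 2) :=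
    calc ‖q‖ ^ 2 * ‖q‖ ^ 2 = ‖⟪q, q⟫‖ ^ 2 := by
          rw [← inner_self_re_eq_norm, inner_self_eq_norm_mul_norm]
          ring
      _ ≤ _ := norm_inner_sum_sq_le F c (fun w => wordOp V w a) q
      _ ≤ _ := by gcongr
  rcases (sq_nonneg ‖q‖).eq_or_lt with hq | hq
  · rw [← hq]
    positivity
  · exact le_of_mul_le_mul_right (by linarith) hq

theorem IsWandering.sum_norm_sq_le {ζ a : E} (hζ : IsWandering V ζ)
    (ha : ∀ y, orbitSum V a y ≤ (1 / 4 : ℝ≥0) * ‖y‖ₑ ^ 2) (F : Finset (List ι))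
    (c : List ι → ℂ) :
    ∑ w ∈ F, ‖c w‖ ^ 2 ≤ 4 * ‖∑ w ∈ F, c w • wordOp V w (ζ + a)‖ ^ 2 := by
  simp only [map_add, smul_add, Finset.sum_add_distrib]
  set o := ∑ w ∈ F, c w • wordOp V w ζ with ho
  set q := ∑ w ∈ F, c w • wordOp V w a with hq
  rw [← hζ.norm_sum_wordOp_sq F c, ← ho]
  have hperturbation : ‖q‖ ≤ ‖o‖ / 2 := by
    have hsq := norm_sum_wordOp_sq_le ha F c
    rw [← hζ.norm_sum_wordOp_sq F c, ← ho, ← hq] at hsq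
    push_cast at hsq
    exact le_of_sq_le_sq (by linarith) (by positivity)
  have hlower : ‖o‖ ≤ 2 * ‖o + q‖ := by
    have htriangle := norm_sub_le (o + q) q
    rw [add_sub_cancel_right] at htriangle
    linarith
  calc ‖o‖ ^ 2 ≤ (2 * ‖o + q‖) ^ 2 := by gcongr
    _ = 4 * ‖o + q‖ ^ 2 := by ring

theorem IsWandering.norm_inner_sq_le_of_mem_orbitSpan {ζ a : E} (hζ : IsWandering V ζ)
    (ha : ∀ y, orbitSum V a y ≤ (1 / 4 : ℝ≥0) * ‖y‖ₑ ^ 2) {d : ℕ} {z : E} {t : ℝ≥0}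
    (ht : orbitTail V d (ζ + a) z ≤ t) {p : E} (hp : p ∈ orbitSpan V d (ζ + a)) :
    ‖⟪p, z⟫‖ ^ 2 ≤ 4 * ‖p‖ ^ 2 * t := by
  have hclosed : IsClosed {p : E | ‖⟪p, z⟫‖ ^ 2 ≤ 4 * ‖p‖ ^ 2 * t} :=
    isClosed_le (by fun_prop) (by fun_prop)
  refine closure_minimal (fun p hp => ?_) hclosed hp
  obtain ⟨l, hl, rfl⟩ := (Finsupp.mem_span_image_iff_linearCombination ℂ).1 hp
  rw [Set.mem_ofPred_eq, Finsupp.linearCombination_apply, Finsupp.sum]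
  refine (norm_inner_sum_sq_le l.support l _ z).trans ?_
  gcongr
  · exact hζ.sum_norm_sq_le ha _ _
  · refine sum_norm_sq_le_of_sum_enorm_sq_le _ _ (le_trans ?_ ht)
    refine le_trans (Finset.sum_le_sum fun w hw => ?_) (ENNReal.sum_le_tsum l.support)
    exact (if_pos (show d ≤ w.length from (Finsupp.mem_supported ℂ l).1 hl hw)).ge

theorem IsAbsCont.exists_smul_orbitSum_le {a : E} (ha : IsAbsCont V a) {ε : ℝ≥0} (hε : 0 < ε) :
    ∃ c : ℂ, c ≠ 0 ∧ ∀ y, orbitSum V (c • a) y ≤ ε * ‖y‖ₑ ^ 2 := by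
  obtain ⟨C, hC⟩ := ha
  have hC1 : 0 < C + 1 := by positivity
  set c : ℝ≥0 := NNReal.sqrt (ε / (C + 1))
  have hc : c ≠ 0 := (NNReal.sqrt_pos.2 (div_pos hε hC1)).ne'
  have hcC : c ^ 2 * C ≤ ε := by
    rw [NNReal.sq_sqrt, div_mul_eq_mul_div, div_le_iff₀ hC1]
    gcongr
    exact le_self_add
  refine ⟨(c : ℝ), by exact_mod_cast hc, fun y => ?_⟩
  calc orbitSum V (((c : ℝ) : ℂ) • a) y ≤ (c : ℝ≥0∞) ^ 2 * (C * ‖y‖ₑ ^ 2) := by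
        rw [orbitSum_smul_left, enorm_eq_nnnorm, Complex.nnnorm_real, NNReal.nnnorm_eq]
        gcongr
        exact hC y
    _ = ((c ^ 2 * C : ℝ≥0) : ℝ≥0∞) * ‖y‖ₑ ^ 2 := by push_cast; ring
    _ ≤ ε * ‖y‖ₑ ^ 2 := by gcongr

variable [CompleteSpace E] [Fintype ι]

theorem IsCuntzRow.reducingCore_orbitSpan_le (hV : IsCuntzRow V) (d : ℕ) (b : E) :
    reducingCore V (orbitSpan V 0 b) ≤ orbitSpan V d b := by
  induction d with
  | zero => exact reducingCore_le
  | succ d ih =>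
    intro y hy
    rw [← hV.sum_map_star y]
    exact Submodule.sum_mem _ fun i _ => map_mem_orbitSpan_succ i <| ih <|
      (hV.isRowIsometry.reduces_reducingCore _).star_mem i y hy

theorem IsCuntzRow.reducingCore_orbitSpan_eq_bot (hV : IsCuntzRow V) {ζ a : E}
    (hζ : IsWandering V ζ) (ha : ∀ y, orbitSum V a y ≤ (1 / 4 : ℝ≥0) * ‖y‖ₑ ^ 2) :
    reducingCore V (orbitSpan V 0 (ζ + a)) = ⊥ := by
  have habsCont : IsAbsCont V (ζ + a) := hζ.isAbsCont.add ⟨1 / 4, ha⟩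
  refine (Submodule.eq_bot_iff _).2 fun y hy => ext_inner_right ℂ fun z => ?_
  have hsmall (t : ℝ≥0) (ht : 0 < t) : ‖⟪y, z⟫‖ ^ 2 ≤ 4 * ‖y‖ ^ 2 * t := by
    obtain ⟨d, hd⟩ := exists_orbitTail_le (habsCont.orbitSum_ne_top z) (ENNReal.coe_pos.2 ht)
    exact hζ.norm_inner_sq_le_of_mem_orbitSpan ha hd (hV.reducingCore_orbitSpan_le d _ hy)
  have hlimit : Filter.Tendsto (fun t : ℝ≥0 => 4 * ‖y‖ ^ 2 * (t : ℝ)) (𝓝[>] 0) (𝓝 0) := by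
    have hcont : Continuous fun t : ℝ≥0 => 4 * ‖y‖ ^ 2 * (t : ℝ) := by fun_prop
    simpa using (hcont.tendsto 0).mono_left nhdsWithin_le_nhds
  have hle : ‖⟪y, z⟫‖ ^ 2 ≤ 0 :=
    ge_of_tendsto hlimit (eventually_mem_nhdsWithin.mono fun t ht => hsmall t ht)
  rw [inner_zero_left]
  simpa using le_antisymm hle (sq_nonneg _)

-- For small `c ≠ 0` the vector `ζ + c • a` generates an invariant subspace with zero reducing
-- core, which the Wold decomposition spans by wandering vectors.
theorem IsCuntzRow.mem_closure_span_wandering_of_isAbsCont (hV : IsCuntzRow V) {ζ a : E}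
    (hζ : IsWandering V ζ) (ha : IsAbsCont V a) :
    a ∈ (Submodule.span ℂ {ζ : E | IsWandering V ζ}).topologicalClosure := by
  set W := (Submodule.span ℂ {ζ : E | IsWandering V ζ}).topologicalClosure
  obtain ⟨c, hc, hca⟩ := ha.exists_smul_orbitSum_le (ε := 1 / 4) (by norm_num)
  have hspan := hV.eq_closure_span_wandering (isClosed_orbitSpan V 0 (ζ + c • a))
    (fun i _ => map_mem_orbitSpan i) (hV.reducingCore_orbitSpan_eq_bot hζ hca)
  have hperturbed : ζ + c • a ∈ W := by
    have hself : ζ + c • a ∈ orbitSpan V 0 (ζ + c • a) := by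
      simpa using wordOp_mem_orbitSpan V (ζ + c • a) (w := []) le_rfl
    rw [hspan] at hself
    exact Submodule.topologicalClosure_mono (Submodule.span_mono fun ζ hζ => hζ.2) hself
  have hζW : ζ ∈ W := Submodule.le_topologicalClosure _ (Submodule.subset_span hζ)
  rwa [W.add_mem_iff_right hζW, W.smul_mem_iff hc] at hperturbed

end WanderingSpan

section Restriction

variable {E ι : Type*} [NormedAddCommGroup E] [InnerProductSpace ℂ E] {V : ι → E →L[ℂ] E}
  {M : Submodule ℂ E}

/-- The restriction of a family of operators to a subspace (meaningful when the subspace is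
invariant, as for `restrictCLM`). -/
def rowRestrict (V : ι → E →L[ℂ] E) (M : Submodule ℂ E) (i : ι) : M →L[ℂ] M :=
  restrictCLM (V i) M

theorem coe_rowRestrict_apply (hM : ∀ i, ∀ x ∈ M, V i x ∈ M) (i : ι) (x : M) :
    (rowRestrict V M i x : E) = V i x := by
  rw [rowRestrict, restrictCLM, dif_pos (hM i)]
  rfl

theorem coe_wordOp_rowRestrict_apply (hM : ∀ i, ∀ x ∈ M, V i x ∈ M) (w : List ι) (x : M) :
    (wordOp (rowRestrict V M) w x : E) = wordOp V w x := by
  induction w with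
  | nil => rfl
  | cons i w ih => rw [wordOp_cons_apply, wordOp_cons_apply, coe_rowRestrict_apply hM, ih]

theorem isWandering_rowRestrict_iff (hM : ∀ i, ∀ x ∈ M, V i x ∈ M) {ζ : M} :
    IsWandering (rowRestrict V M) ζ ↔ IsWandering V (ζ : E) := by
  simp only [IsWandering, Submodule.coe_inner, coe_wordOp_rowRestrict_apply hM, Submodule.coe_norm]

theorem orbitSum_rowRestrict (hM : ∀ i, ∀ x ∈ M, V i x ∈ M) (x y : M) :
    orbitSum (rowRestrict V M) x y = orbitSum V (x : E) y := by
  simp only [orbitSum, Submodule.coe_inner, coe_wordOp_rowRestrict_apply hM]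

theorem IsRowIsometry.restrict (hV : IsRowIsometry V) (hM : ∀ i, ∀ x ∈ M, V i x ∈ M) :
    IsRowIsometry (rowRestrict V M) := fun i j x y => by
  simp only [Submodule.coe_inner, coe_rowRestrict_apply hM]
  exact hV i j x y

variable [CompleteSpace M]

theorem IsAbsCont.of_rowRestrict (hM : ∀ i, ∀ x ∈ M, V i x ∈ M) {x : M}
    (hx : IsAbsCont (rowRestrict V M) x) : IsAbsCont V (x : E) := by
  obtain ⟨C, hC⟩ := hx
  refine ⟨C, fun y => ?_⟩
  calc orbitSum V (x : E) y = orbitSum (rowRestrict V M) x (M.orthogonalProjectionOnto y) := by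
        rw [orbitSum_rowRestrict hM, orbitSum, orbitSum]
        congr 1 with w
        exact (Submodule.inner_orthogonalProjectionOnto_eq_of_mem_left
          ⟨_, wordOp_apply_mem hM w x.2⟩ y).symm
    _ ≤ C * ‖M.orthogonalProjectionOnto y‖ₑ ^ 2 := hC _
    _ ≤ C * ‖y‖ₑ ^ 2 := by
        gcongr
        exact enorm_le_iff_norm_le.2 (M.norm_orthogonalProjectionOnto_apply_le y)

variable [CompleteSpace E]

theorem Reduces.coe_star_rowRestrict_apply (hM : Reduces V M) (i : ι) (x : M) :
    (star (rowRestrict V M i) x : E) = star (V i) x := by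
  have hstar : star (rowRestrict V M i) x = ⟨star (V i) x, hM.star_mem i x x.2⟩ := by
    refine ext_inner_right ℂ fun y => ?_
    rw [inner_star_left, Submodule.coe_inner, Submodule.coe_inner,
      coe_rowRestrict_apply hM.map_mem, inner_star_left]
  rw [hstar]

theorem IsAbsCont.orthogonalProjectionOnto (hM : Reduces V M) {x : E} (hx : IsAbsCont V x) :
    IsAbsCont (rowRestrict V M) (M.orthogonalProjectionOnto x) := by
  obtain ⟨C, hC⟩ := hx
  refine ⟨C, fun y => (Eq.le ?_).trans (hC y)⟩
  rw [orbitSum_rowRestrict hM.map_mem, orbitSum, orbitSum]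
  congr 1 with w
  rw [← inner_star_right, ← inner_star_right]
  exact Submodule.inner_orthogonalProjectionOnto_eq_of_mem_right
    ⟨_, hM.star_wordOp_mem w y.2⟩ x

theorem IsCuntzRow.restrict [Fintype ι] (hV : IsCuntzRow V) (hM : Reduces V M) :
    IsCuntzRow (rowRestrict V M) where
  isRowIsometry := hV.isRowIsometry.restrict hM.map_mem
  sum_map_star x := by
    ext
    simp only [Submodule.coe_sum, coe_rowRestrict_apply hM.map_mem,
      hM.coe_star_rowRestrict_apply, hV.sum_map_star]

end Restriction

section AbsolutelyContinuous

variable {E ι : Type*} [NormedAddCommGroup E] [InnerProductSpace ℂ E] {V : ι → E →L[ℂ] E}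

/-- The closed subspace spanned by the absolutely continuous vectors. -/
def absContClosure (V : ι → E →L[ℂ] E) : Submodule ℂ E := (absContSubmodule V).topologicalClosure

theorem isClosed_absContClosure (V : ι → E →L[ℂ] E) : IsClosed (absContClosure V : Set E) :=
  Submodule.isClosed_topologicalClosure _

theorem IsAbsCont.mem_absContClosure {x : E} (hx : IsAbsCont V x) : x ∈ absContClosure V :=
  Submodule.le_topologicalClosure _ hx

theorem map_mem_absContClosure_of_forall_isAbsCont {A : E →L[ℂ] E}
    (hA : ∀ x, IsAbsCont V x → IsAbsCont V (A x)) {x : E} (hx : x ∈ absContClosure V) :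
    A x ∈ absContClosure V :=
  map_mem_closure A.continuous hx hA

theorem map_mem_absContClosure (i : ι) : ∀ x ∈ absContClosure V, V i x ∈ absContClosure V :=
  fun _ => map_mem_absContClosure_of_forall_isAbsCont fun _ hx => hx.map i

variable [CompleteSpace E] {K : Submodule ℂ E}

theorem Reduces.dense_absContSubmodule_rowRestrict (hK : Reduces V K) [CompleteSpace K]
    (hle : K ≤ absContClosure V) : Dense (absContSubmodule (rowRestrict V K) : Set K) := by
  intro y
  have hmaps : Set.MapsTo K.orthogonalProjectionOnto (absContSubmodule V : Set E)
      (absContSubmodule (rowRestrict V K)) := fun a ha => IsAbsCont.orthogonalProjectionOnto hK ha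
  have hprojection := map_mem_closure K.orthogonalProjectionOnto.continuous (hle y.2) hmaps
  rwa [Submodule.orthogonalProjectionOnto_mem_subspace_eq_self] at hprojection

variable [Fintype ι] [Nontrivial ι]

theorem IsCuntzRow.exists_isWandering_mem (hV : IsCuntzRow V) (hK : Reduces V K)
    (hKc : IsClosed (K : Set E)) (hle : K ≤ absContClosure V) (hne : K ≠ ⊥) :
    ∃ ζ ∈ K, IsWandering V ζ := by
  have : CompleteSpace K := hKc.completeSpace_coe
  have : Nontrivial K := Submodule.nontrivial_iff_ne_bot.2 hne
  obtain ⟨ζ, hζ⟩ := (hV.restrict hK).exists_isWandering_of_dense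
    (hK.dense_absContSubmodule_rowRestrict hle)
  exact ⟨ζ, ζ.2, (isWandering_rowRestrict_iff hK.map_mem).1 hζ⟩

theorem IsCuntzRow.eq_closure_span_wandering_of_le_absContClosure (hV : IsCuntzRow V)
    (hK : Reduces V K) (hKc : IsClosed (K : Set E)) (hle : K ≤ absContClosure V) :
    K = (Submodule.span ℂ {ζ : E | ζ ∈ K ∧ IsWandering V ζ}).topologicalClosure := by
  have hspan_le : (Submodule.span ℂ {ζ : E | ζ ∈ K ∧ IsWandering V ζ}).topologicalClosure ≤ K :=
    Submodule.topologicalClosure_minimal _ (Submodule.span_le.2 fun ζ hζ => hζ.1) hKc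
  rcases eq_or_ne K ⊥ with hbot | hne
  · exact le_antisymm (hbot.le.trans bot_le) hspan_le
  have : CompleteSpace K := hKc.completeSpace_coe
  obtain ⟨ζ, hζK, hζ⟩ := hV.exists_isWandering_mem hK hKc hle hne
  have hζ' : IsWandering (rowRestrict V K) ⟨ζ, hζK⟩ := (isWandering_rowRestrict_iff hK.map_mem).2 hζ
  refine le_antisymm (fun y hy => ?_) hspan_le
  have hspan : (⟨y, hy⟩ : K) ∈
      (Submodule.span ℂ {ζ : K | IsWandering (rowRestrict V K) ζ}).topologicalClosure :=
    closure_minimal (fun a ha => (hV.restrict hK).mem_closure_span_wandering_of_isAbsCont hζ' ha)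
      (Submodule.isClosed_topologicalClosure _) (hK.dense_absContSubmodule_rowRestrict hle _)
  have hcomap : Submodule.span ℂ {ζ : K | IsWandering (rowRestrict V K) ζ} ≤
      (Submodule.span ℂ {ζ : E | ζ ∈ K ∧ IsWandering V ζ}).comap K.subtype :=
    Submodule.span_le.2 fun ξ hξ =>
      Submodule.subset_span ⟨ξ.2, (isWandering_rowRestrict_iff hK.map_mem).1 hξ⟩
  exact map_mem_closure (t := (Submodule.span ℂ {ζ : E | ζ ∈ K ∧ IsWandering V ζ} : Set E))
    continuous_subtype_val hspan fun z hz => hcomap hz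

theorem IsCuntzRow.exists_isWandering (hV : IsCuntzRow V) {x : E} (hx : IsAbsCont V x)
    (hx0 : x ≠ 0) : ∃ ζ, IsWandering V ζ := by
  by_cases hcore : reducingCore V (absContClosure V) = ⊥
  · by_contra! hnone
    have hspan := hV.eq_closure_span_wandering (isClosed_absContClosure V) map_mem_absContClosure
      hcore
    have hmem := hspan ▸ hx.mem_absContClosure
    exact hx0 (by simpa [hnone] using hmem)
  · obtain ⟨ζ, -, hζ⟩ := hV.exists_isWandering_mem (hV.isRowIsometry.reduces_reducingCore _)
      (isClosed_reducingCore (isClosed_absContClosure V)) reducingCore_le hcore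
    exact ⟨ζ, hζ⟩

end AbsolutelyContinuous

section CommutingRows

variable {E ι ι' κ : Type*} [NormedAddCommGroup E] [InnerProductSpace ℂ E]

theorem fnWordOp_succ (V : ι → E →L[ℂ] E) (d : ℕ) :
    (fun u : Fin (d + 1) → ι => fnWordOp V u) =
      (fun r : ι × (Fin d → ι) => V r.1 * fnWordOp V r.2) ∘ (Fin.consEquiv fun _ => ι).symm := by
  funext u
  simp only [fnWordOp, List.ofFn_succ, wordOp_cons]
  rfl

theorem orbitSum_eq_tsum_fnWordOp [Fintype ι] (V : ι → E →L[ℂ] E) (x y : E) :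
    orbitSum V x y = ∑' d, ∑ u : Fin d → ι, ‖⟪fnWordOp V u x, y⟫‖ₑ ^ 2 := by
  rw [orbitSum, sqSum, ← List.equivSigmaTuple.symm.tsum_eq, ENNReal.tsum_sigma']
  refine tsum_congr fun d => ?_
  rw [tsum_fintype]
  rfl

namespace IsCuntzRow

variable [CompleteSpace E] [Fintype ι] [Fintype κ] {V : ι → E →L[ℂ] E} {W : κ → E →L[ℂ] E}

theorem comp_equiv (hV : IsCuntzRow V) (e : κ ≃ ι) : IsCuntzRow (V ∘ e) where
  isRowIsometry i j x y := by simpa using hV.isRowIsometry (e i) (e j) x y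
  sum_map_star x := (e.sum_comp fun i => V i (star (V i) x)).trans (hV.sum_map_star x)

theorem mul (hV : IsCuntzRow V) (hW : IsCuntzRow W) :
    IsCuntzRow fun r : ι × κ => V r.1 * W r.2 where
  isRowIsometry r s x y := by
    rw [mul_apply_eq_comp, mul_apply_eq_comp, hV.isRowIsometry, hW.isRowIsometry, ← ite_and]
    simp only [Prod.ext_iff]
  sum_map_star x := by
    rw [Fintype.sum_prod_type]
    simp only [star_mul, mul_apply_eq_comp, ← map_sum, hW.sum_map_star, hV.sum_map_star]

theorem fnWordOp (hV : IsCuntzRow V) (d : ℕ) :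
    IsCuntzRow fun u : Fin d → ι => fnWordOp V u := by
  induction d with
  | zero =>
    exact ⟨fun u v x y => by simp [_root_.fnWordOp, Subsingleton.elim u v],
      fun x => by simp [_root_.fnWordOp]⟩
  | succ d ih =>
    rw [fnWordOp_succ]
    exact (hV.mul ih).comp_equiv _

end IsCuntzRow

/-- Two finite families commute up to a bijection `(i, j) ↦ (i', j')` of the pairs of indices,
`V i * W j = W j' * V i'`. The bijection is encoded by the equality of all sums over the two
families of products. -/
def RowsCommute [Fintype ι] [Fintype κ] (V : ι → E →L[ℂ] E) (W : κ → E →L[ℂ] E) : Prop :=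
  ∀ g : (E →L[ℂ] E) → ℝ≥0∞, ∑ i, ∑ j, g (V i * W j) = ∑ i, ∑ j, g (W j * V i)

namespace RowsCommute

variable [Fintype ι] [Fintype ι'] [Fintype κ] {V : ι → E →L[ℂ] E} {V' : ι' → E →L[ℂ] E}
  {W : κ → E →L[ℂ] E}

theorem refl (V : ι → E →L[ℂ] E) : RowsCommute V V := fun _ => Finset.sum_comm

theorem symm (h : RowsCommute V W) : RowsCommute W V := fun g => by
  rw [Finset.sum_comm, ← h g, Finset.sum_comm]

theorem comp_equiv (h : RowsCommute V W) (e : ι' ≃ ι) : RowsCommute (V ∘ e) W := fun g =>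
  (e.sum_comp fun i => ∑ j, g (V i * W j)).trans
    ((h g).trans (e.sum_comp fun i => ∑ j, g (W j * V i)).symm)

theorem mul (h : RowsCommute V W) (h' : RowsCommute V' W) :
    RowsCommute (fun r : ι × ι' => V r.1 * V' r.2) W := fun g => by
  rw [Fintype.sum_prod_type, Fintype.sum_prod_type]
  calc ∑ i, ∑ i', ∑ j, g (V i * V' i' * W j)
      = ∑ i, ∑ i', ∑ j, g (V i * W j * V' i') := by
        refine Finset.sum_congr rfl fun i _ => ?_
        simpa only [mul_assoc] using h' fun X => g (V i * X)
    _ = ∑ i', ∑ i, ∑ j, g (V i * W j * V' i') := Finset.sum_comm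
    _ = ∑ i', ∑ i, ∑ j, g (W j * V i * V' i') :=
        Finset.sum_congr rfl fun i' _ => h fun X => g (X * V' i')
    _ = ∑ i, ∑ i', ∑ j, g (W j * V i * V' i') := Finset.sum_comm
    _ = ∑ i, ∑ i', ∑ j, g (W j * (V i * V' i')) := by simp only [mul_assoc]

theorem fnWordOp (h : RowsCommute V W) (d : ℕ) :
    RowsCommute (fun u : Fin d → ι => fnWordOp V u) W := by
  induction d with
  | zero => exact fun g => by simp [_root_.fnWordOp]
  | succ d ih =>
    rw [fnWordOp_succ]
    exact (h.mul ih).comp_equiv _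

variable [CompleteSpace E]

theorem sum_orbitSum_map (h : RowsCommute V W) (x y : E) :
    ∑ j, orbitSum V (W j x) y = ∑ j, orbitSum V x (star (W j) y) := by
  simp only [orbitSum_eq_tsum_fnWordOp, inner_star_right]
  rw [← Summable.tsum_finsetSum fun _ _ => ENNReal.summable,
    ← Summable.tsum_finsetSum fun _ _ => ENNReal.summable]
  refine tsum_congr fun d => ?_
  rw [Finset.sum_comm]
  refine (h.fnWordOp d fun X => ‖⟪X x, y⟫‖ₑ ^ 2).trans ?_
  rw [Finset.sum_comm]
  rfl

end RowsCommute

theorem IsAbsCont.map_of_rowsCommute [CompleteSpace E] [Fintype ι] [Fintype κ]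
    {V : ι → E →L[ℂ] E} {W : κ → E →L[ℂ] E} (h : RowsCommute V W) (hW : IsCuntzRow W) {x : E}
    (hx : IsAbsCont V x) (j : κ) : IsAbsCont V (W j x) := by
  obtain ⟨C, hC⟩ := hx
  refine ⟨C, fun y => ?_⟩
  calc orbitSum V (W j x) y ≤ ∑ j, orbitSum V (W j x) y :=
        Finset.single_le_sum (f := fun j => orbitSum V (W j x) y) (fun _ _ => zero_le)
          (Finset.mem_univ j)
    _ = ∑ j, orbitSum V x (star (W j) y) := h.sum_orbitSum_map x y
    _ ≤ ∑ j, C * ‖star (W j) y‖ₑ ^ 2 := Finset.sum_le_sum fun j _ => hC _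
    _ = C * ‖y‖ₑ ^ 2 := by rw [← Finset.mul_sum, hW.sum_enorm_star_sq]

end CommutingRows

section WordExchange

variable {E ι κ : Type*} [NormedAddCommGroup E] [InnerProductSpace ℂ E] {V : ι → E →L[ℂ] E}
  {W : κ → E →L[ℂ] E}

theorem exists_wordOp_mul (h : ∀ i j, ∃ i' j', V i * W j = W j' * V i') (u : List ι) (j : κ) :
    ∃ (u' : List ι) (j' : κ), u'.length = u.length ∧ wordOp V u * W j = W j' * wordOp V u' := by
  induction u with
  | nil => exact ⟨[], j, rfl, by simp⟩
  | cons i u ih =>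
    obtain ⟨u', j₁, hu', hj₁⟩ := ih
    obtain ⟨i', j', hij⟩ := h i j₁
    refine ⟨i' :: u', j', by simp [hu'], ?_⟩
    rw [wordOp_cons, wordOp_cons, mul_assoc, hj₁, ← mul_assoc, hij, mul_assoc]

theorem exists_wordOp_mul_wordOp (h : ∀ i j, ∃ i' j', V i * W j = W j' * V i') (u : List ι)
    (v : List κ) : ∃ (u' : List ι) (v' : List κ), u'.length = u.length ∧ v'.length = v.length ∧
      wordOp V u * wordOp W v = wordOp W v' * wordOp V u' := by
  induction v generalizing u with
  | nil => exact ⟨u, [], rfl, rfl, by simp⟩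
  | cons j v ih =>
    obtain ⟨u₁, j', hu₁, hj'⟩ := exists_wordOp_mul h u j
    obtain ⟨u', v', hu', hv', hexchange⟩ := ih u₁
    refine ⟨u', j' :: v', hu'.trans hu₁, by simp [hv'], ?_⟩
    rw [wordOp_cons, wordOp_cons, ← mul_assoc, hj', mul_assoc, hexchange, mul_assoc]

end WordExchange

namespace IsDilationType

variable {E ι : Type*} [NormedAddCommGroup E] [InnerProductSpace ℂ E] [CompleteSpace E]
  [Fintype ι] {V : ι → E →L[ℂ] E} {N : Submodule ℂ E}

theorem reducingCore_absContClosure_eq_bot [Nontrivial ι] (hdil : IsDilationType V)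
    (hV : IsCuntzRow V) : reducingCore V (absContClosure V) = ⊥ := by
  by_contra hne
  have hred := hV.isRowIsometry.reduces_reducingCore (absContClosure V)
  have hclosed := isClosed_reducingCore (V := V) (isClosed_absContClosure V)
  exact hdil.2 ⟨_, hne, hclosed, hred.map_mem, hred.star_mem,
    Or.inl (hV.eq_closure_span_wandering_of_le_absContClosure hred hclosed reducingCore_le)⟩

theorem eq_bot_of_le_absContClosure_orthogonal (hdil : IsDilationType V) (hV : IsCuntzRow V)
    (hN : Reduces V N) (hNc : IsClosed (N : Set E)) (hle : N ≤ (absContClosure V)ᗮ) : N = ⊥ := by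
  by_contra hne
  have : CompleteSpace N := hNc.completeSpace_coe
  have hsingular : IsSelfAdjointRow (rowRestrict V N) :=
    (hV.isRowIsometry.restrict hN.map_mem).isSelfAdjointRow fun x hx =>
      Subtype.ext <| inner_self_eq_zero.1 <|
        Submodule.inner_right_of_mem_orthogonal (hx.of_rowRestrict hN.map_mem).mem_absContClosure
          (hle x.2)
  exact hdil.2 ⟨N, hne, hNc, hN.map_mem, hN.star_mem, Or.inr hsingular⟩

end IsDilationType

theorem IsWandering.mem_orthogonal_of_restrictedAlgSelfAdjoint {E ι : Type*}
    [NormedAddCommGroup E] [InnerProductSpace ℂ E] [CompleteSpace E] [Fintype ι] [Nontrivial ι]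
    {V : ι → E →L[ℂ] E} {M : Submodule ℂ E} {ζ : E} (hζ : IsWandering V ζ) (hV : IsCuntzRow V)
    (hM : Reduces V M) (hMc : IsClosed (M : Set E)) (hsa : restrictedAlgSelfAdjoint V M) :
    ζ ∈ Mᗮ := by
  have : CompleteSpace M := hMc.completeSpace_coe
  rw [← Submodule.orthogonalProjectionOnto_eq_zero_iff]
  by_contra hne
  obtain ⟨ξ, hξ⟩ :=
    (hV.restrict hM).exists_isWandering (hζ.isAbsCont.orthogonalProjectionOnto hM) hne
  exact IsSelfAdjointRow.not_isWandering hsa (hV.restrict hM).isRowIsometry ξ hξ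

theorem exists_add_eq_mul_and_add_eq_mul {p q : ℕ} (hp : 0 < p) (hq : 0 < q) (a b : ℕ) :
    ∃ c d r, a + c = r * p ∧ b + d = r * q := by
  have ha : a ≤ (a + b) * p := (Nat.le_add_right a b).trans (Nat.le_mul_of_pos_right _ hp)
  have hb : b ≤ (a + b) * q := (Nat.le_add_left b a).trans (Nat.le_mul_of_pos_right _ hq)
  exact ⟨(a + b) * p - a, (a + b) * q - b, a + b, Nat.add_sub_of_le ha, Nat.add_sub_of_le hb⟩

theorem nontrivial_pairs_of_words {m n k l : ℕ} (hm : 0 < m) (hn : 0 < n)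
    (hkl : 2 ≤ m ∧ 0 < k ∨ 2 ≤ n ∧ 0 < l) : Nontrivial ((Fin k → Fin m) × (Fin l → Fin n)) := by
  have := Fin.pos_iff_nonempty.1 hm
  have := Fin.pos_iff_nonempty.1 hn
  rcases hkl with ⟨hm, hk⟩ | ⟨hn, hl⟩
  · have := Fin.nontrivial_iff_two_le.2 hm
    have := Fin.pos_iff_nonempty.1 hk
    infer_instance
  · have := Fin.nontrivial_iff_two_le.2 hn
    have := Fin.pos_iff_nonempty.1 hl
    infer_instance

namespace TwoGraphRep

variable {m n : ℕ} {θ : Equiv.Perm (Fin m × Fin n)} {H : Type*}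
  [NormedAddCommGroup H] [InnerProductSpace ℂ H] [CompleteSpace H] {ρ : TwoGraphRep m n θ H}
  {a b c d k l p q : ℕ} {X Y : H →L[ℂ] H} {L M N : Submodule ℂ H}

/-- The operators `S_u T_v` of degree `(a, b)`, that is with `|u| = a` and `|v| = b`. -/
def grade (ρ : TwoGraphRep m n θ H) (a b : ℕ) : Set (H →L[ℂ] H) := Set.range (ρ.rowKL a b)

theorem mem_grade_iff : X ∈ ρ.grade a b ↔
    ∃ u v, u.length = a ∧ v.length = b ∧ X = wordOp ρ.S u * wordOp ρ.T v := by
  constructor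
  · rintro ⟨⟨u, v⟩, rfl⟩
    exact ⟨List.ofFn u, List.ofFn v, by simp, by simp, rfl⟩
  · rintro ⟨u, v, rfl, rfl, rfl⟩
    exact ⟨(u.get, v.get), by simp [rowKL, fnWordOp]⟩

theorem one_mem_grade : (1 : H →L[ℂ] H) ∈ ρ.grade 0 0 :=
  mem_grade_iff.2 ⟨[], [], rfl, rfl, by simp⟩

theorem grade_nonempty (hm : 0 < m) (hn : 0 < n) (a b : ℕ) : (ρ.grade a b).Nonempty :=
  ⟨_, (fun _ => ⟨0, hm⟩, fun _ => ⟨0, hn⟩), rfl⟩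

theorem exists_T_mul_S (ρ : TwoGraphRep m n θ H) (j : Fin n) (i : Fin m) :
    ∃ j' i', ρ.T j * ρ.S i = ρ.S i' * ρ.T j' :=
  ⟨(θ.symm (i, j)).2, (θ.symm (i, j)).1, by simp [ρ.comm]⟩

theorem mul_mem_grade (hX : X ∈ ρ.grade a b) (hY : Y ∈ ρ.grade c d) :
    X * Y ∈ ρ.grade (a + c) (b + d) := by
  obtain ⟨u, v, rfl, rfl, rfl⟩ := mem_grade_iff.1 hX
  obtain ⟨s, t, rfl, rfl, rfl⟩ := mem_grade_iff.1 hY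
  obtain ⟨v', s', hv, hs, hexchange⟩ := exists_wordOp_mul_wordOp ρ.exists_T_mul_S v s
  refine mem_grade_iff.2 ⟨u ++ s', v' ++ t, by simp [hs], by simp [hv], ?_⟩
  rw [mul_assoc, ← mul_assoc _ _ (wordOp ρ.T t), hexchange, wordOp_append, wordOp_append]
  simp only [mul_assoc]

theorem exists_mul_eq_of_mem_grade (hX : X ∈ ρ.grade (a + c) (b + d)) :
    ∃ Y ∈ ρ.grade a b, ∃ Z ∈ ρ.grade c d, X = Y * Z := by
  obtain ⟨u, v, hu, hv, rfl⟩ := mem_grade_iff.1 hX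
  obtain ⟨s', t', hs, ht, hexchange⟩ := exists_wordOp_mul_wordOp (V := ρ.S) (W := ρ.T)
    (fun i j => ⟨_, _, ρ.comm i j⟩) (u.drop a) (v.take b)
  refine ⟨_, mem_grade_iff.2 ⟨u.take a, t', by simp [hu], by simp [ht, hv], rfl⟩,
    _, mem_grade_iff.2 ⟨s', v.drop b, by simp [hs, hu], by simp [hv], rfl⟩, ?_⟩
  conv_lhs => rw [← List.take_append_drop a u, ← List.take_append_drop b v]
  rw [wordOp_append, wordOp_append, mul_assoc, ← mul_assoc (wordOp ρ.S (u.drop a)), hexchange]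
  simp only [mul_assoc]

theorem wordOp_rowKL_mem_grade (w : List ((Fin k → Fin m) × (Fin l → Fin n))) :
    wordOp (ρ.rowKL k l) w ∈ ρ.grade (w.length * k) (w.length * l) := by
  induction w with
  | nil => simpa using one_mem_grade
  | cons r w ih =>
    have hmul := mul_mem_grade (Set.mem_range_self r) ih
    rwa [← wordOp_cons, Nat.add_comm k, Nat.add_comm l, ← Nat.succ_mul, ← Nat.succ_mul] at hmul

theorem exists_wordOp_rowKL_of_mem_grade {r : ℕ} (hX : X ∈ ρ.grade (r * k) (r * l)) :
    ∃ w, wordOp (ρ.rowKL k l) w = X := by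
  induction r generalizing X with
  | zero =>
    obtain ⟨u, v, hu, hv, rfl⟩ := mem_grade_iff.1 hX
    simp only [zero_mul, List.length_eq_zero_iff] at hu hv
    exact ⟨[], by simp [hu, hv]⟩
  | succ r ih =>
    rw [Nat.succ_mul, Nat.succ_mul, Nat.add_comm _ k, Nat.add_comm _ l] at hX
    obtain ⟨_, ⟨s, rfl⟩, Z, hZ, rfl⟩ := exists_mul_eq_of_mem_grade hX
    obtain ⟨w, rfl⟩ := ih hZ
    exact ⟨s :: w, wordOp_cons _ _ _⟩

theorem rowsCommute_S_T (ρ : TwoGraphRep m n θ H) : RowsCommute ρ.S ρ.T := fun g => by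
  rw [← Fintype.sum_prod_type', ← Fintype.sum_prod_type']
  simp only [ρ.comm]
  exact Equiv.sum_comp θ fun r => g (ρ.T r.2 * ρ.S r.1)

theorem rowsCommute_rowKL_S (ρ : TwoGraphRep m n θ H) (k l : ℕ) :
    RowsCommute (ρ.rowKL k l) ρ.S :=
  ((RowsCommute.refl ρ.S).fnWordOp k).mul (ρ.rowsCommute_S_T.symm.fnWordOp l)

theorem rowsCommute_rowKL_T (ρ : TwoGraphRep m n θ H) (k l : ℕ) :
    RowsCommute (ρ.rowKL k l) ρ.T :=
  (ρ.rowsCommute_S_T.fnWordOp k).mul ((RowsCommute.refl ρ.T).fnWordOp l)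

/-- The subspace `L` is invariant under all the generators `S_i` and `T_j` of the
representation. -/
structure IsInvariant (ρ : TwoGraphRep m n θ H) (L : Submodule ℂ H) : Prop where
  S_mem : ∀ i, ∀ x ∈ L, ρ.S i x ∈ L
  T_mem : ∀ j, ∀ x ∈ L, ρ.T j x ∈ L

theorem IsInvariant.apply_mem (hL : ρ.IsInvariant L) (hX : X ∈ ρ.grade a b) {x : H}
    (hx : x ∈ L) : X x ∈ L := by
  obtain ⟨u, v, -, -, rfl⟩ := mem_grade_iff.1 hX
  exact wordOp_apply_mem hL.S_mem u (wordOp_apply_mem hL.T_mem v hx)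

theorem IsInvariant.rowKL_mem (hL : ρ.IsInvariant L) (r : (Fin k → Fin m) × (Fin l → Fin n)) :
    ∀ x ∈ L, ρ.rowKL k l r x ∈ L :=
  fun _ => hL.apply_mem (Set.mem_range_self r)

namespace CuntzType

theorem isCuntzRow_S (h : ρ.CuntzType) : IsCuntzRow ρ.S where
  isRowIsometry i j x y := by
    rw [← inner_star_right, ← mul_apply_eq_comp, ρ.isometS]
    split_ifs <;> simp
  sum_map_star x := by simpa using congrArg (fun A : H →L[ℂ] H => A x) h.1

theorem isCuntzRow_T (h : ρ.CuntzType) : IsCuntzRow ρ.T where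
  isRowIsometry i j x y := by
    rw [← inner_star_right, ← mul_apply_eq_comp, ρ.isometT]
    split_ifs <;> simp
  sum_map_star x := by simpa using congrArg (fun A : H →L[ℂ] H => A x) h.2

theorem isCuntzRow_rowKL (h : ρ.CuntzType) (k l : ℕ) : IsCuntzRow (ρ.rowKL k l) :=
  (h.isCuntzRow_S.fnWordOp k).mul (h.isCuntzRow_T.fnWordOp l)

theorem isInvariant_absContClosure (h : ρ.CuntzType) (k l : ℕ) :
    ρ.IsInvariant (absContClosure (ρ.rowKL k l)) where
  S_mem i _ := map_mem_absContClosure_of_forall_isAbsCont fun _ hx =>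
    hx.map_of_rowsCommute (ρ.rowsCommute_rowKL_S k l) h.isCuntzRow_S i
  T_mem j _ := map_mem_absContClosure_of_forall_isAbsCont fun _ hx =>
    hx.map_of_rowsCommute (ρ.rowsCommute_rowKL_T k l) h.isCuntzRow_T j

theorem inner_apply_apply (h : ρ.CuntzType) (hX : X ∈ ρ.grade a b) (x y : H) :
    ⟪X x, X y⟫ = ⟪x, y⟫ := by
  obtain ⟨r, rfl⟩ := hX
  exact (h.isCuntzRow_rowKL a b).isRowIsometry.inner_map_map r x y

theorem star_apply_eq_sum_rowKL (h : ρ.CuntzType) (X : H →L[ℂ] H) (a b : ℕ) (y : H) :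
    star X y = ∑ r, ρ.rowKL a b r (star (X * ρ.rowKL a b r) y) := by
  conv_lhs => rw [← (h.isCuntzRow_rowKL a b).sum_map_star (star X y)]
  simp only [star_mul, mul_apply_eq_comp]

theorem star_apply_mem (h : ρ.CuntzType) (hp : 0 < p) (hq : 0 < q)
    (hM : Reduces (ρ.rowKL p q) M) (hN : ∀ c d, ∀ Z ∈ ρ.grade c d, ∀ x ∈ M, Z x ∈ N)
    (hX : X ∈ ρ.grade a b) {y : H} (hy : y ∈ M) : star X y ∈ N := by
  obtain ⟨c, d, r, hc, hd⟩ := exists_add_eq_mul_and_add_eq_mul hp hq a b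
  rw [h.star_apply_eq_sum_rowKL X c d]
  refine Submodule.sum_mem _ fun s _ => hN c d _ (Set.mem_range_self s) _ ?_
  have hmul := mul_mem_grade hX (Set.mem_range_self s)
  rw [hc, hd] at hmul
  obtain ⟨w, hw⟩ := exists_wordOp_rowKL_of_mem_grade hmul
  exact hw ▸ hM.star_wordOp_mem w hy

theorem reducingCore_rowKL_le (h : ρ.CuntzType) (hp : 0 < p) (hq : 0 < q)
    (hL : ρ.IsInvariant L) : reducingCore (ρ.rowKL p q) L ≤ reducingCore (ρ.rowKL k l) L :=
  fun _ hy => mem_reducingCore_of_invariant hL.rowKL_mem fun w =>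
    h.star_apply_mem hp hq ((h.isCuntzRow_rowKL p q).isRowIsometry.reduces_reducingCore L)
      (fun _ _ _ hZ _ hx => hL.apply_mem hZ (reducingCore_le hx)) (wordOp_rowKL_mem_grade w) hy

theorem apply_mem_orthogonal (h : ρ.CuntzType) (hm : 0 < m) (hn : 0 < n) (hp : 0 < p)
    (hq : 0 < q) (hL : ρ.IsInvariant L) (hM : ∀ r, ∀ x ∈ M, ρ.rowKL p q r x ∈ M)
    (hML : M ≤ Lᗮ) (hX : X ∈ ρ.grade a b) {x : H} (hx : x ∈ M) : X x ∈ Lᗮ := by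
  refine (Submodule.mem_orthogonal _ _).2 fun v hv => ?_
  obtain ⟨c, d, r, hc, hd⟩ := exists_add_eq_mul_and_add_eq_mul hp hq a b
  obtain ⟨Y, hY⟩ := grade_nonempty (ρ := ρ) hm hn c d
  have hmul := mul_mem_grade hY hX
  rw [add_comm c, add_comm d, hc, hd] at hmul
  obtain ⟨w, hw⟩ := exists_wordOp_rowKL_of_mem_grade hmul
  have hYX : Y (X x) ∈ M := by
    rw [← mul_apply_eq_comp, ← hw]
    exact wordOp_apply_mem hM w hx
  rw [← h.inner_apply_apply hY]
  exact Submodule.inner_right_of_mem_orthogonal (hL.apply_mem hY hv) (hML hYX)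

theorem le_reducingCore_orthogonal (h : ρ.CuntzType) (hm : 0 < m) (hn : 0 < n) (hp : 0 < p)
    (hq : 0 < q) (hL : ρ.IsInvariant L) (hM : Reduces (ρ.rowKL p q) M) (hML : M ≤ Lᗮ) :
    M ≤ reducingCore (ρ.rowKL k l) Lᗮ := fun _ hx => mem_reducingCore.2 fun w w' =>
  h.star_apply_mem (N := Lᗮ.comap (wordOp (ρ.rowKL k l) w).toLinearMap) hp hq hM
    (fun _ _ _ hZ _ hy => h.apply_mem_orthogonal hm hn hp hq hL hM.map_mem hML
      (mul_mem_grade (wordOp_rowKL_mem_grade w) hZ) hy) (wordOp_rowKL_mem_grade w') hx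

end CuntzType

end TwoGraphRep

theorem statement10_general {m n : ℕ} (hm : 0 < m) (hn : 0 < n)
    {θ : Equiv.Perm (Fin m × Fin n)} {H : Type*}
    [NormedAddCommGroup H] [InnerProductSpace ℂ H] [CompleteSpace H]
    (ρ : TwoGraphRep m n θ H) (hCuntz : ρ.CuntzType)
    (k l : ℕ) (hkl : 2 ≤ m ∧ 0 < k ∨ 2 ≤ n ∧ 0 < l)
    (hdil : IsDilationType (ρ.rowKL k l))
    (p q : ℕ) (hp : 0 < p) (hq : 0 < q) :
    ¬ ∃ M : Submodule ℂ H, M ≠ ⊥ ∧ IsClosed (M : Set H) ∧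
        (∀ a, ∀ x ∈ M, ρ.rowKL p q a x ∈ M) ∧
        (∀ a, ∀ x ∈ M, star (ρ.rowKL p q a) x ∈ M) ∧
        restrictedAlgSelfAdjoint (ρ.rowKL p q) M := by
  rintro ⟨M, hM, hMc, hMmap, hMstar, hMsa⟩
  have hMred : Reduces (ρ.rowKL p q) M := ⟨hMmap, hMstar⟩
  have := nontrivial_pairs_of_words hm hn hkl
  have := nontrivial_pairs_of_words hm hn (hkl.imp (⟨·.1, hp⟩) (⟨·.1, hq⟩))
  have hV := hCuntz.isCuntzRow_rowKL k l
  have hW := hCuntz.isCuntzRow_rowKL p q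
  set L := absContClosure (ρ.rowKL k l)
  have hL : ρ.IsInvariant L := hCuntz.isInvariant_absContClosure k l
  have hcore : reducingCore (ρ.rowKL p q) L = ⊥ :=
    le_bot_iff.1 ((hCuntz.reducingCore_rowKL_le hp hq hL).trans
      (hdil.reducingCore_absContClosure_eq_bot hV).le)
  have hspan := hW.eq_closure_span_wandering (isClosed_absContClosure _) hL.rowKL_mem hcore
  have hLM : L ≤ Mᗮ := hspan.le.trans <| Submodule.topologicalClosure_minimal _
    (Submodule.span_le.2 fun ζ hζ =>
      hζ.2.mem_orthogonal_of_restrictedAlgSelfAdjoint hW hMred hMc hMsa)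
    (Submodule.isClosed_orthogonal M)
  have hML : M ≤ Lᗮ := M.le_orthogonal_orthogonal.trans (Submodule.orthogonal_le hLM)
  have hMcore : M ≤ reducingCore (ρ.rowKL k l) Lᗮ :=
    hCuntz.le_reducingCore_orthogonal hm hn hp hq hL hMred hML
  refine hM (le_bot_iff.1 (hMcore.trans (hdil.eq_bot_of_le_absContClosure_orthogonal hV
    (hV.isRowIsometry.reduces_reducingCore _)
    (isClosed_reducingCore (Submodule.isClosed_orthogonal L)) reducingCore_le).le))

/-- If some `[S_u T_v : |u|=k, |v|=l]` (k,l>0) is of dilation type, then no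
`[S_u T_v : |u|=p, |v|=q]` (p,q>0) has a singular direct summand. -/
theorem statement10 {m n : ℕ} (hm : 0 < m) (hn : 0 < n) (hmn : 2 ≤ m ∨ 2 ≤ n)
    {θ : Equiv.Perm (Fin m × Fin n)} {H : Type*}
    [NormedAddCommGroup H] [InnerProductSpace ℂ H] [CompleteSpace H]
    (ρ : TwoGraphRep m n θ H) (hCuntz : ρ.CuntzType)
    (k l : ℕ) (hk : 0 < k) (hl : 0 < l)
    (hdil : IsDilationType (ρ.rowKL k l))
    (p q : ℕ) (hp : 0 < p) (hq : 0 < q) :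
    ¬ ∃ M : Submodule ℂ H, M ≠ ⊥ ∧ IsClosed (M : Set H) ∧
        (∀ a, ∀ x ∈ M, ρ.rowKL p q a x ∈ M) ∧
        (∀ a, ∀ x ∈ M, star (ρ.rowKL p q a) x ∈ M) ∧
        restrictedAlgSelfAdjoint (ρ.rowKL p q) M := by
  exact statement10_general hm hn ρ hCuntz k l (hmn.imp (⟨·, hk⟩) (⟨·, hl⟩)) hdil p q hp hq
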